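/- arXiv:1401.6450 — 5 statements merged into one kernel-verified Lean document; each statement's English description precedes it below -/
import Mathlib

section
/- For every subset J′ ⊆ J, one has Σ^x(A_{J′}) ≤ exp( −2β · Σ_{{q,r} ∈ 𝔈J′} ξ^{qr} ). -/
open Filter

noncomputable section

namespace InfFilter

/-- The space-time box `J = [1,k] × [-m,m] ⊆ ℤ²`. -/
def Jset (k m : ℕ) : Finset (ℤ × ℤ) :=
  Finset.Icc (1 : ℤ) (k : ℤ) ×ˢ Finset.Icc (-(m : ℤ)) (m : ℤ)

/-- The boundary `∂J = {0} × [-m,m] ∪ [1,k] × {-m-1, m+1}`. -/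
def bJset (k m : ℕ) : Finset (ℤ × ℤ) :=
  ({0} : Finset ℤ) ×ˢ Finset.Icc (-(m : ℤ)) (m : ℤ) ∪
    Finset.Icc (1 : ℤ) (k : ℤ) ×ˢ ({-(m : ℤ) - 1, (m : ℤ) + 1} : Finset ℤ)

/-- The Hamiltonian
`β [ Σ_{{q,r}⊆J, ‖q-r‖₁=1} ξ^{qr} x^q x^r z^q z^r + Σ_{q∈J, r∈∂J, ‖q-r‖₁=1} ξ^{qr} x^q z^q ]`;
each unordered edge inside `J` is enumerated once via `r = q + (1,0)` or `r = q + (0,1)`. -/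
def ham (β : ℝ) (k m : ℕ) (ξ : ℤ × ℤ → ℤ × ℤ → ℝ) (x z : ℤ × ℤ → ℝ) : ℝ :=
  β * ((∑ q ∈ Jset k m, ∑ r ∈ Jset k m,
        if r = (q.1 + 1, q.2) ∨ r = (q.1, q.2 + 1) then ξ q r * x q * x r * z q * z r else 0) +
      ∑ q ∈ Jset k m, ∑ r ∈ bJset k m,
        if (q.1 - r.1).natAbs + (q.2 - r.2).natAbs = 1 then ξ q r * x q * z q else 0)

/-- Extend a sign configuration on `J` (encoded by booleans) to all of `ℤ²`. -/
def ext (k m : ℕ) (z : {q // q ∈ Jset k m} → Bool) : ℤ × ℤ → ℝ := fun q =>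
  if h : q ∈ Jset k m then (if z ⟨q, h⟩ then 1 else -1) else 0

/-- The sign configuration on `J` determined by booleans, as an element of `{-1,1}^J`. -/
def sgn (k m : ℕ) (z : {q // q ∈ Jset k m} → Bool) : {q // q ∈ Jset k m} → ℝ :=
  fun q => if z q then 1 else -1

/-- The random bond Ising measure `Σ^x(A)` on `{-1,1}^J` with boundary condition `x`
and bond signs `ξ`. -/
def gibbs (β : ℝ) (k m : ℕ) (ξ : ℤ × ℤ → ℤ × ℤ → ℝ) (x : ℤ × ℤ → ℝ)
    (A : Set ({q // q ∈ Jset k m} → ℝ)) : ℝ :=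
  (∑ z : {q // q ∈ Jset k m} → Bool,
      A.indicator (fun _ => Real.exp (ham β k m ξ x (ext k m z))) (sgn k m z)) /
    ∑ z : {q // q ∈ Jset k m} → Bool, Real.exp (ham β k m ξ x (ext k m z))

/-- The boundary edge set `𝔈J' = {{q,r} : q ∈ J', r ∈ (J∖J') ∪ ∂J, ‖q-r‖₁ = 1}`, enumerated
as ordered pairs `(q, r)` with `q ∈ J'` (each unordered boundary edge occurs exactly once). -/
def bEdges (k m : ℕ) (J' : Finset (ℤ × ℤ)) : Finset ((ℤ × ℤ) × (ℤ × ℤ)) :=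
  (J' ×ˢ ((Jset k m \ J') ∪ bJset k m)).filter
    fun e => (e.1.1 - e.2.1).natAbs + (e.1.2 - e.2.2).natAbs = 1

/-- The event `A_{J'}`: configurations `z ∈ {-1,1}^J` with `z^q = -x^q` for every `q ∈ J'`
in some boundary edge of `J'` and `z^r = x^r` for every `r ∈ J∖J'` in some boundary edge. -/
def contourEvent (k m : ℕ) (x : ℤ × ℤ → ℝ) (J' : Finset (ℤ × ℤ)) :
    Set ({q // q ∈ Jset k m} → ℝ) :=
  {z | (∀ q : {q // q ∈ Jset k m}, q.1 ∈ J' →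
          (∃ r, (q.1, r) ∈ bEdges k m J') → z q = -x q.1) ∧
       ∀ r : {q // q ∈ Jset k m}, r.1 ∈ Jset k m \ J' →
          (∃ q, (q, r.1) ∈ bEdges k m J') → z r = x r.1}

/-!
Put `w q = x q * z q` for `q ∈ J` and `w r = 1` for `r ∈ ∂J`, so that the Hamiltonian is
`β ∑ ξ q r * w q * w r` over all edges. Flipping the spins in `J'` changes the sign of the term of
an edge exactly when the edge lies in `𝔈J'`. On the event `A_{J'}` every such edge has
`w q * w r = -1`, hence the flip multiplies the Gibbs weight by `exp (2 * β * ∑ ξ)`. As the flip is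
a bijection of the configurations, summing over `A_{J'}` and comparing with the partition function
gives the estimate.
-/

section FiniteSums

lemma sum_indicator_le_mul_sum_of_perm {Ω R : Type*} [Fintype Ω] [Semiring R] [PartialOrder R]
    [IsOrderedRing R] (σ : Equiv.Perm Ω) (A : Set Ω) {w : Ω → R} (hw : ∀ z, 0 ≤ w z) {c : R}
    (hc : 0 ≤ c) (hσ : ∀ z ∈ A, w z ≤ c * w (σ z)) :
    ∑ z, A.indicator w z ≤ c * ∑ z, w z := by
  rw [← Equiv.sum_comp σ w, Finset.mul_sum]
  exact Finset.sum_le_sum fun z _ =>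
    Set.indicator_apply_le' (hσ z) fun _ => mul_nonneg hc (hw (σ z))

lemma sum_sum_eq_sum_cut {α M : Type*} [DecidableEq α] [AddCommMonoid M] {s t : Finset α}
    (hts : t ⊆ s) {F : α → α → M} (hF : ∀ q r, (q ∈ t ↔ r ∈ t) → F q r = 0) :
    ∑ q ∈ s, ∑ r ∈ s, F q r = ∑ q ∈ t, ∑ r ∈ s \ t, (F q r + F r q) := by
  have sum_of_mem : ∀ q ∈ t, ∑ r ∈ s, F q r = ∑ r ∈ s \ t, F q r := fun q hq =>
    (Finset.sum_subset Finset.sdiff_subset fun r _ hr => hF q r (by simp_all)).symm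
  have sum_of_notMem : ∀ q ∈ s \ t, ∑ r ∈ s, F q r = ∑ r ∈ t, F q r := fun q hq =>
    (Finset.sum_subset hts fun r _ hr => hF q r (by simp_all)).symm
  rw [← Finset.sum_sdiff hts, Finset.sum_congr rfl sum_of_mem, Finset.sum_congr rfl sum_of_notMem,
    Finset.sum_comm, add_comm]
  simp only [Finset.sum_add_distrib]

end FiniteSums

section Flip

variable {α R : Type*} [DecidableEq α] [CommRing R]

/-- The spin configuration obtained from `w` by reversing the spins in `t`. -/
def flipOn (t : Finset α) (w : α → R) (q : α) : R :=
  if q ∈ t then -w q else w q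

lemma flipOn_of_mem {t : Finset α} (w : α → R) {q : α} (hq : q ∈ t) : flipOn t w q = -w q :=
  if_pos hq

lemma flipOn_of_notMem {t : Finset α} (w : α → R) {q : α} (hq : q ∉ t) : flipOn t w q = w q :=
  if_neg hq

lemma flipOn_mul_flipOn_of_iff {t : Finset α} (w : α → R) {q r : α} (h : q ∈ t ↔ r ∈ t) :
    flipOn t w q * flipOn t w r = w q * w r := by
  by_cases hr : r ∈ t
  · rw [flipOn_of_mem w (h.2 hr), flipOn_of_mem w hr, neg_mul_neg]
  · rw [flipOn_of_notMem w (mt h.1 hr), flipOn_of_notMem w hr]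

/-- The interaction energy `∑ ξ q r * w q * w r` over the ordered pairs in `s × s'` related by
`D`. -/
def pairEnergy (D : α → α → Prop) [DecidableRel D] (ξ : α → α → R) (s s' : Finset α)
    (w : α → R) : R :=
  ∑ q ∈ s, ∑ r ∈ s', if D q r then ξ q r * w q * w r else 0

variable (D : α → α → Prop) [DecidableRel D] (ξ : α → α → R) {s t : Finset α} (w : α → R)

lemma pairEnergy_sub_flipOn_self (hD : ∀ q r, D q r → ¬ D r q) (hξ : ∀ q r, ξ q r = ξ r q)
    (hts : t ⊆ s) :
    pairEnergy D ξ s s w - pairEnergy D ξ s s (flipOn t w) =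
      2 * pairEnergy (fun q r => D q r ∨ D r q) ξ t (s \ t) w := by
  simp only [pairEnergy, ← Finset.sum_sub_distrib]
  rw [sum_sum_eq_sum_cut hts]
  · simp only [Finset.mul_sum]
    refine Finset.sum_congr rfl fun q hq => Finset.sum_congr rfl fun r hr => ?_
    rw [flipOn_of_mem w hq, flipOn_of_notMem w (Finset.mem_sdiff.1 hr).2, hξ r q]
    have hqr := hD q r
    split_ifs <;> first | tauto | ring
  · intro q r hqr
    simp only [mul_assoc, flipOn_mul_flipOn_of_iff w hqr, sub_self]

lemma pairEnergy_sub_flipOn_of_disjoint {s' : Finset α} (hts : t ⊆ s) (hts' : Disjoint t s') :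
    pairEnergy D ξ s s' w - pairEnergy D ξ s s' (flipOn t w) = 2 * pairEnergy D ξ t s' w := by
  simp only [pairEnergy, ← Finset.sum_sub_distrib, Finset.mul_sum]
  have flipOn_right : ∀ r ∈ s', flipOn t w r = w r := fun r hr =>
    flipOn_of_notMem w (Finset.disjoint_right.1 hts' hr)
  rw [← Finset.sum_subset hts]
  · refine Finset.sum_congr rfl fun q hq => Finset.sum_congr rfl fun r hr => ?_
    rw [flipOn_of_mem w hq, flipOn_right r hr]
    split_ifs <;> ring
  · intro q _ hq
    refine Finset.sum_eq_zero fun r hr => ?_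
    rw [flipOn_of_notMem w hq, flipOn_right r hr, sub_self]

end Flip

section Lattice

/-- Adjacency in `ℤ²`, i.e. `‖q - r‖₁ = 1`. -/
abbrev LatticeAdj (q r : ℤ × ℤ) : Prop :=
  (q.1 - r.1).natAbs + (q.2 - r.2).natAbs = 1

/-- The orientation of the edges of `ℤ²` along the positive coordinate directions, by which the
Hamiltonian enumerates every edge inside the box once. -/
abbrev LatticeSucc (q r : ℤ × ℤ) : Prop :=
  r = (q.1 + 1, q.2) ∨ r = (q.1, q.2 + 1)

lemma latticeAdj_iff (q r : ℤ × ℤ) : LatticeAdj q r ↔ LatticeSucc q r ∨ LatticeSucc r q := by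
  simp only [LatticeAdj, LatticeSucc, Prod.ext_iff]
  omega

lemma LatticeSucc.asymm (q r : ℤ × ℤ) : LatticeSucc q r → ¬ LatticeSucc r q := by
  simp only [LatticeSucc, Prod.ext_iff]
  omega

end Lattice

section Box

variable {k m : ℕ} {J' : Finset (ℤ × ℤ)}

lemma disjoint_Jset_bJset (k m : ℕ) : Disjoint (Jset k m) (bJset k m) := by
  rw [Finset.disjoint_left]
  rintro ⟨a, b⟩ hJ hbJ
  simp only [Jset, bJset, Finset.mem_union, Finset.mem_product, Finset.mem_Icc,
    Finset.mem_singleton, Finset.mem_insert] at hJ hbJ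
  omega

lemma fst_mem_of_mem_bEdges {e : (ℤ × ℤ) × (ℤ × ℤ)} (he : e ∈ bEdges k m J') : e.1 ∈ J' :=
  (Finset.mem_product.1 (Finset.mem_filter.1 he).1).1

lemma snd_notMem_of_mem_bEdges (hJ' : J' ⊆ Jset k m) {e : (ℤ × ℤ) × (ℤ × ℤ)}
    (he : e ∈ bEdges k m J') : e.2 ∉ J' := by
  rcases Finset.mem_union.1 (Finset.mem_product.1 (Finset.mem_filter.1 he).1).2 with h | h
  · exact (Finset.mem_sdiff.1 h).2
  · exact fun h' => Finset.disjoint_left.1 (disjoint_Jset_bJset k m) (hJ' h') h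

lemma sum_bEdges (ξ : ℤ × ℤ → ℤ × ℤ → ℝ) (w : ℤ × ℤ → ℝ) :
    ∑ e ∈ bEdges k m J', ξ e.1 e.2 * w e.1 * w e.2 =
      pairEnergy LatticeAdj ξ J' (Jset k m \ J') w + pairEnergy LatticeAdj ξ J' (bJset k m) w := by
  have hdisj : Disjoint (Jset k m \ J') (bJset k m) :=
    (disjoint_Jset_bJset k m).mono_left Finset.sdiff_subset
  rw [bEdges, Finset.sum_filter, Finset.sum_product]
  simp only [pairEnergy, Finset.sum_union hdisj, Finset.sum_add_distrib]

end Box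

section Hamiltonian

variable {k m : ℕ} {J' : Finset (ℤ × ℤ)}

/-- The overlap `x q * z q` of `z` with `x` inside the box, extended by `1` outside; the value `1`
makes the boundary field in `ham` a pair interaction. -/
def overlap (k m : ℕ) (x z : ℤ × ℤ → ℝ) (q : ℤ × ℤ) : ℝ :=
  if q ∈ Jset k m then x q * z q else 1

lemma overlap_of_mem (x z : ℤ × ℤ → ℝ) {q : ℤ × ℤ} (hq : q ∈ Jset k m) :
    overlap k m x z q = x q * z q :=
  if_pos hq

lemma overlap_of_notMem (x z : ℤ × ℤ → ℝ) {q : ℤ × ℤ} (hq : q ∉ Jset k m) :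
    overlap k m x z q = 1 :=
  if_neg hq

lemma overlap_flipOn (hJ' : J' ⊆ Jset k m) (x z : ℤ × ℤ → ℝ) :
    overlap k m x (flipOn J' z) = flipOn J' (overlap k m x z) := by
  funext q
  by_cases hq : q ∈ J'
  · rw [flipOn_of_mem _ hq, overlap_of_mem _ _ (hJ' hq), overlap_of_mem _ _ (hJ' hq),
      flipOn_of_mem _ hq, mul_neg]
  · simp only [overlap, flipOn_of_notMem _ hq]

lemma ham_eq_pairEnergy (β : ℝ) (ξ : ℤ × ℤ → ℤ × ℤ → ℝ) (x z : ℤ × ℤ → ℝ) :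
    ham β k m ξ x z =
      β * (pairEnergy LatticeSucc ξ (Jset k m) (Jset k m) (overlap k m x z) +
        pairEnergy LatticeAdj ξ (Jset k m) (bJset k m) (overlap k m x z)) := by
  unfold ham pairEnergy
  congr 2 <;> refine Finset.sum_congr rfl fun q hq => Finset.sum_congr rfl fun r hr => ?_
  · rw [overlap_of_mem x z hq, overlap_of_mem x z hr]
    congr 1
    ring
  · rw [overlap_of_mem x z hq,
      overlap_of_notMem x z (Finset.disjoint_right.1 (disjoint_Jset_bJset k m) hr)]
    congr 1
    ring

lemma ham_sub_ham_flipOn (β : ℝ) {ξ : ℤ × ℤ → ℤ × ℤ → ℝ} (hξ : ∀ q r, ξ q r = ξ r q)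
    (hJ' : J' ⊆ Jset k m) (x z : ℤ × ℤ → ℝ) :
    ham β k m ξ x z - ham β k m ξ x (flipOn J' z) =
      2 * β * ∑ e ∈ bEdges k m J', ξ e.1 e.2 * overlap k m x z e.1 * overlap k m x z e.2 := by
  have interior := pairEnergy_sub_flipOn_self LatticeSucc ξ (overlap k m x z)
    LatticeSucc.asymm hξ hJ'
  have boundary := pairEnergy_sub_flipOn_of_disjoint LatticeAdj ξ (overlap k m x z) hJ'
    ((disjoint_Jset_bJset k m).mono_left hJ')
  simp only [← latticeAdj_iff] at interior
  rw [sum_bEdges, ham_eq_pairEnergy, ham_eq_pairEnergy, overlap_flipOn hJ']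
  linear_combination β * interior + β * boundary

end Hamiltonian

section Contour

variable {k m : ℕ} {J' : Finset (ℤ × ℤ)} {x : ℤ × ℤ → ℝ}

/-- The bijection of `Bool`-encoded configurations that reverses the spins in `J'`. -/
def flipPerm (k m : ℕ) (J' : Finset (ℤ × ℤ)) : Equiv.Perm ({q // q ∈ Jset k m} → Bool) :=
  Equiv.piCongrRight fun q => if q.1 ∈ J' then Equiv.boolNot else Equiv.refl Bool

lemma ext_apply_of_mem (z : {q // q ∈ Jset k m} → Bool) {q : ℤ × ℤ} (hq : q ∈ Jset k m) :
    ext k m z q = sgn k m z ⟨q, hq⟩ :=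
  dif_pos hq

lemma ext_flipPerm (k m : ℕ) (J' : Finset (ℤ × ℤ)) (z : {q // q ∈ Jset k m} → Bool) :
    ext k m (flipPerm k m J' z) = flipOn J' (ext k m z) := by
  funext q
  by_cases hq : q ∈ Jset k m
  · by_cases hq' : q ∈ J' <;> cases hspin : z ⟨q, hq⟩ <;>
      simp [ext, flipPerm, flipOn, hq, hq', hspin]
  · simp [ext, flipOn, hq]

lemma overlap_fst_of_mem_contourEvent (hJ' : J' ⊆ Jset k m)
    (hx : ∀ q ∈ Jset k m, x q = 1 ∨ x q = -1) {z : {q // q ∈ Jset k m} → Bool}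
    (hz : sgn k m z ∈ contourEvent k m x J') {e : (ℤ × ℤ) × (ℤ × ℤ)} (he : e ∈ bEdges k m J') :
    overlap k m x (ext k m z) e.1 = -1 := by
  have hmem := fst_mem_of_mem_bEdges he
  have hspin : sgn k m z ⟨e.1, hJ' hmem⟩ = -x e.1 := hz.1 ⟨e.1, hJ' hmem⟩ hmem ⟨e.2, he⟩
  rw [overlap_of_mem x _ (hJ' hmem), ext_apply_of_mem z (hJ' hmem), hspin, mul_neg,
    mul_self_eq_one_iff.2 (hx e.1 (hJ' hmem))]

lemma overlap_snd_of_mem_contourEvent (hJ' : J' ⊆ Jset k m)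
    (hx : ∀ q ∈ Jset k m, x q = 1 ∨ x q = -1) {z : {q // q ∈ Jset k m} → Bool}
    (hz : sgn k m z ∈ contourEvent k m x J') {e : (ℤ × ℤ) × (ℤ × ℤ)} (he : e ∈ bEdges k m J') :
    overlap k m x (ext k m z) e.2 = 1 := by
  by_cases hmem : e.2 ∈ Jset k m
  · have hspin : sgn k m z ⟨e.2, hmem⟩ = x e.2 :=
      hz.2 ⟨e.2, hmem⟩ (Finset.mem_sdiff.2 ⟨hmem, snd_notMem_of_mem_bEdges hJ' he⟩) ⟨e.1, he⟩
    rw [overlap_of_mem x _ hmem, ext_apply_of_mem z hmem, hspin,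
      mul_self_eq_one_iff.2 (hx e.2 hmem)]
  · exact overlap_of_notMem x _ hmem

lemma ham_eq_add_ham_flipPerm (β : ℝ) {ξ : ℤ × ℤ → ℤ × ℤ → ℝ} (hξ : ∀ q r, ξ q r = ξ r q)
    (hJ' : J' ⊆ Jset k m) (hx : ∀ q ∈ Jset k m, x q = 1 ∨ x q = -1)
    {z : {q // q ∈ Jset k m} → Bool} (hz : sgn k m z ∈ contourEvent k m x J') :
    ham β k m ξ x (ext k m z) =
      -2 * β * ∑ e ∈ bEdges k m J', ξ e.1 e.2 +
        ham β k m ξ x (ext k m (flipPerm k m J' z)) := by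
  have hcut : ∑ e ∈ bEdges k m J', ξ e.1 e.2 * overlap k m x (ext k m z) e.1 *
      overlap k m x (ext k m z) e.2 = -∑ e ∈ bEdges k m J', ξ e.1 e.2 := by
    rw [← Finset.sum_neg_distrib]
    refine Finset.sum_congr rfl fun e he => ?_
    rw [overlap_fst_of_mem_contourEvent hJ' hx hz he,
      overlap_snd_of_mem_contourEvent hJ' hx hz he, mul_neg_one, mul_one]
  have hflip := ham_sub_ham_flipOn β hξ hJ' x (ext k m z)
  rw [hcut, ← ext_flipPerm] at hflip
  linear_combination hflip

lemma gibbs_le_of_perm {β : ℝ} {ξ : ℤ × ℤ → ℤ × ℤ → ℝ} {A : Set ({q // q ∈ Jset k m} → ℝ)}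
    (σ : Equiv.Perm ({q // q ∈ Jset k m} → Bool)) {c : ℝ}
    (hσ : ∀ z, sgn k m z ∈ A →
      ham β k m ξ x (ext k m z) ≤ c + ham β k m ξ x (ext k m (σ z))) :
    gibbs β k m ξ x A ≤ Real.exp c := by
  have partition_pos :
      0 < ∑ z : {q // q ∈ Jset k m} → Bool, Real.exp (ham β k m ξ x (ext k m z)) :=
    Finset.sum_pos (fun _ _ => Real.exp_pos _) Finset.univ_nonempty
  refine (div_le_iff₀ partition_pos).2 (sum_indicator_le_mul_sum_of_perm σ (sgn k m ⁻¹' A)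
    (fun z => (Real.exp_pos _).le) (Real.exp_pos c).le fun z hz => ?_)
  rw [← Real.exp_add]
  exact Real.exp_le_exp.2 (hσ z hz)

end Contour

theorem statement5_general (k m : ℕ) (β : ℝ) (ξ : ℤ × ℤ → ℤ × ℤ → ℝ)
    (hξsym : ∀ q r, ξ q r = ξ r q) (x : ℤ × ℤ → ℝ)
    (hx : ∀ q ∈ Jset k m, x q = 1 ∨ x q = -1)
    (J' : Finset (ℤ × ℤ)) (hJ' : J' ⊆ Jset k m) :
    gibbs β k m ξ x (contourEvent k m x J') ≤
      Real.exp (-2 * β * ∑ e ∈ bEdges k m J', ξ e.1 e.2) :=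
  gibbs_le_of_perm (flipPerm k m J') fun _ hz =>
    (ham_eq_add_ham_flipPerm β hξsym hJ' hx hz).le

/-- **Lemma 3.7 (Peierls estimate).**  For every `J' ⊆ J`,
`Σ^x(A_{J'}) ≤ exp(−2β Σ_{{q,r} ∈ 𝔈J'} ξ^{qr})`. -/
theorem statement5 (k m : ℕ) (hk : 1 ≤ k) (hm : 1 ≤ m) (β : ℝ) (hβ : 0 ≤ β)
    (ξ : ℤ × ℤ → ℤ × ℤ → ℝ) (hξsym : ∀ q r, ξ q r = ξ r q)
    (hξval : ∀ q r, q ∈ Jset k m → r ∈ Jset k m ∪ bJset k m →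
      (q.1 - r.1).natAbs + (q.2 - r.2).natAbs = 1 → ξ q r = 1 ∨ ξ q r = -1)
    (x : ℤ × ℤ → ℝ) (hx : ∀ q, q ∈ Jset k m ∪ bJset k m → x q = 1 ∨ x q = -1)
    (J' : Finset (ℤ × ℤ)) (hJ' : J' ⊆ Jset k m) :
    gibbs β k m ξ x (contourEvent k m x J') ≤
      Real.exp (-2 * β * ∑ e ∈ bEdges k m J', ξ e.1 e.2) := by
  exact statement5_general k m β ξ hξsym x (fun q hq => hx q (Finset.mem_union_left _ hq)) J' hJ'

end InfFilter
end
end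

section
/- Let (X_k, Y_k)_{k∈ℤ} be a stationary stochastic process where X_k = (X_k^v)_{v∈ℤ} takes values in {−1,1}^ℤ and Y_k takes values in a standard Borel space. Suppose that for every m ≥ 1 and every function f : {−1,1}^{2m+1} → ℝ, E|E[f(X_k^{−m}, …, X_k^m) | X_0, Y_1, …, Y_k] − E[f(X_k^{−m}, …, X_k^m) | Y_1, …, Y_k]| → 0 as k → ∞. Then for every measurable A ⊆ {−1,1}^ℤ, E|P[X_k ∈ A | X_0, Y_1, …, Y_k] − P[X_k ∈ A | Y_1, …, Y_k]| → 0 as k → ∞ (i.e., the filter is stable). -/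
open MeasureTheory ProbabilityTheory Filter

noncomputable section

namespace InfFilter

variable {Ω : Type*} [MeasurableSpace Ω]

/-- The σ-algebra `σ(Y_1, …, Y_k)`. -/
def obsσ {F : Type*} [MeasurableSpace F] (Y : ℤ → Ω → F) (k : ℕ) : MeasurableSpace Ω :=
  ⨆ ℓ ∈ Finset.Icc (1 : ℤ) (k : ℤ), MeasurableSpace.comap (Y ℓ) inferInstance

/-!
Events depending on finitely many sites form an algebra generating the product σ-algebra, so they
are dense for the pseudometric `ν (A ∆ B)`, where `ν` is the common law of the `X_k`. Conditional
expectation is an `L¹` contraction, so replacing `A` by `B` changes the stability defect of the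
event `X_k ∈ A` by at most `2 ν (A ∆ B)`, uniformly in `k`: this is where stationarity enters.
-/

lemma obsσ_le {F : Type*} [MeasurableSpace F] {Y : ℤ → Ω → F} (hY : ∀ k, Measurable (Y k))
    (k : ℕ) : obsσ Y k ≤ ‹MeasurableSpace Ω› :=
  iSup₂_le fun ℓ _ => (hY ℓ).comap_le

lemma identDistrib_zero_of_stationary {S : Type*} [MeasurableSpace S] {μ : Measure Ω}
    {Z : ℤ → Ω → S} (hZ : ∀ k, Measurable (Z k))
    (hstat : μ.map (fun ω k => Z (k + 1) ω) = μ.map (fun ω k => Z k ω)) (k : ℤ) :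
    IdentDistrib (Z k) (Z 0) μ μ := by
  have shift_identDistrib : IdentDistrib (fun ω k => Z (k + 1) ω) (fun ω k => Z k ω) μ μ :=
    ⟨(measurable_pi_lambda _ fun k => hZ (k + 1)).aemeasurable,
      (measurable_pi_lambda _ hZ).aemeasurable, hstat⟩
  have law_periodic : Function.Periodic (fun k => μ.map (Z k)) 1 := fun k =>
    (shift_identDistrib.comp (measurable_pi_apply k)).map_eq
  exact ⟨(hZ k).aemeasurable, (hZ 0).aemeasurable, by simpa using law_periodic.int_mul_eq k⟩

section CondExpDist

variable {α : Type*} {m₁ m₂ mα : MeasurableSpace α} {μ : Measure α}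

/-- The `L¹(μ)` distance between the conditional expectations of `f` given `m₁` and given `m₂`.
Filter stability says that it vanishes asymptotically when `f` is the indicator of an event about
the current state, `m₂` is generated by the observations, and `m₁` also contains the initial
state. -/
def condExpDist (m₁ m₂ : MeasurableSpace α) [MeasurableSpace α] (μ : Measure α)
    (f : α → ℝ) : ℝ :=
  ∫ a, |(μ[f|m₁]) a - (μ[f|m₂]) a| ∂μ

lemma condExpDist_nonneg (f : α → ℝ) : 0 ≤ condExpDist m₁ m₂ μ f :=
  integral_nonneg fun _ => abs_nonneg _

lemma condExpDist_add_le {f g : α → ℝ} (hf : Integrable f μ) (hg : Integrable g μ) :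
    condExpDist m₁ m₂ μ (f + g) ≤ condExpDist m₁ m₂ μ f + condExpDist m₁ m₂ μ g := by
  have integrable_dist (h : α → ℝ) : Integrable (fun a => |(μ[h|m₁]) a - (μ[h|m₂]) a|) μ :=
    (integrable_condExp.sub integrable_condExp).abs
  unfold condExpDist
  rw [← integral_add (integrable_dist f) (integrable_dist g)]
  refine integral_mono_ae (integrable_dist _) ((integrable_dist f).add (integrable_dist g)) ?_
  filter_upwards [condExp_add hf hg m₁, condExp_add hf hg m₂] with a add₁ add₂
  simp only [add₁, add₂, Pi.add_apply, add_sub_add_comm]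
  exact abs_add_le _ _

lemma condExpDist_le_two_mul_integral_abs (f : α → ℝ) :
    condExpDist m₁ m₂ μ f ≤ 2 * ∫ a, |f a| ∂μ := by
  have integrable_left : Integrable (fun a => |(μ[f|m₁]) a|) μ := integrable_condExp.abs
  have integrable_right : Integrable (fun a => |(μ[f|m₂]) a|) μ := integrable_condExp.abs
  calc condExpDist m₁ m₂ μ f
      ≤ ∫ a, (|(μ[f|m₁]) a| + |(μ[f|m₂]) a|) ∂μ :=
        integral_mono (integrable_condExp.sub integrable_condExp).abs
          (integrable_left.add integrable_right) fun a => abs_sub _ _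
    _ = ∫ a, |(μ[f|m₁]) a| ∂μ + ∫ a, |(μ[f|m₂]) a| ∂μ :=
        integral_add integrable_left integrable_right
    _ ≤ 2 * ∫ a, |f a| ∂μ := by
        rw [two_mul]
        exact add_le_add (integral_abs_condExp_le f) (integral_abs_condExp_le f)

lemma integral_abs_indicator_sub_indicator {A B : Set α} (hA : MeasurableSet A)
    (hB : MeasurableSet B) :
    ∫ a, |A.indicator (1 : α → ℝ) a - B.indicator 1 a| ∂μ = μ.real (symmDiff A B) := by
  have abs_eq (a : α) : |A.indicator (1 : α → ℝ) a - B.indicator 1 a| =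
      (symmDiff A B).indicator 1 a := by
    rw [← Set.abs_indicator_symmDiff]
    exact abs_of_nonneg (Set.indicator_nonneg (fun _ _ => zero_le_one) a)
  simp_rw [abs_eq]
  exact integral_indicator_one (hA.symmDiff hB)

lemma condExpDist_indicator_le {A B : Set α} (hA : MeasurableSet A) (hB : MeasurableSet B)
    (hμA : μ A ≠ ⊤) (hμB : μ B ≠ ⊤) :
    condExpDist m₁ m₂ μ (A.indicator 1) ≤
      condExpDist m₁ m₂ μ (B.indicator 1) + 2 * μ.real (symmDiff A B) := by
  have integrable_A : Integrable (A.indicator (1 : α → ℝ)) μ :=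
    (integrable_indicator_iff hA).2 (integrableOn_const hμA)
  have integrable_B : Integrable (B.indicator (1 : α → ℝ)) μ :=
    (integrable_indicator_iff hB).2 (integrableOn_const hμB)
  calc condExpDist m₁ m₂ μ (A.indicator 1)
      = condExpDist m₁ m₂ μ (B.indicator 1 + (A.indicator 1 - B.indicator 1)) := by
        rw [add_sub_cancel]
    _ ≤ condExpDist m₁ m₂ μ (B.indicator 1) +
          condExpDist m₁ m₂ μ (A.indicator 1 - B.indicator 1) :=
        condExpDist_add_le integrable_B (integrable_A.sub integrable_B)
    _ ≤ condExpDist m₁ m₂ μ (B.indicator 1) + 2 * μ.real (symmDiff A B) := by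
        rw [← integral_abs_indicator_sub_indicator hA hB]
        gcongr
        exact condExpDist_le_two_mul_integral_abs _

theorem tendsto_condExpDist_of_isSetAlgebra {S κ : Type*} [mS : MeasurableSpace S]
    {ν : Measure S} [IsFiniteMeasure ν] {l : Filter κ} {X : κ → α → S}
    (hX : ∀ k, MeasurePreserving (X k) μ ν) {ℱ₁ ℱ₂ : κ → MeasurableSpace α} {𝒜 : Set (Set S)}
    (h𝒜 : IsSetAlgebra 𝒜) (hgen : mS = MeasurableSpace.generateFrom 𝒜)
    (hlim : ∀ B ∈ 𝒜, Tendsto (fun k => condExpDist (ℱ₁ k) (ℱ₂ k) μ ((X k ⁻¹' B).indicator 1))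
      l (nhds 0)) {A : Set S} (hA : MeasurableSet A) :
    Tendsto (fun k => condExpDist (ℱ₁ k) (ℱ₂ k) μ ((X k ⁻¹' A).indicator 1)) l (nhds 0) := by
  refine tendsto_order.2 ⟨fun b hb => Eventually.of_forall fun k =>
    hb.trans_le (condExpDist_nonneg _), fun ε hε => ?_⟩
  have dense : ν.MeasureDense 𝒜 :=
    Measure.MeasureDense.of_generateFrom_isSetAlgebra_finite ν h𝒜 hgen
  obtain ⟨B, hB, hAB⟩ := dense.approx A hA (measure_ne_top ν A) (ε / 4) (by positivity)
  have hBm : MeasurableSet B := dense.measurable B hB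
  have hAB_real : ν.real (symmDiff A B) < ε / 4 := ENNReal.toReal_lt_of_lt_ofReal hAB
  filter_upwards [(tendsto_order.1 (hlim B hB)).2 (ε / 2) (by positivity)] with k hk
  have measure_preimage_ne_top {C : Set S} (hC : MeasurableSet C) : μ (X k ⁻¹' C) ≠ ⊤ := by
    rw [(hX k).measure_preimage hC.nullMeasurableSet]
    exact measure_ne_top ν C
  calc condExpDist (ℱ₁ k) (ℱ₂ k) μ ((X k ⁻¹' A).indicator 1)
      ≤ condExpDist (ℱ₁ k) (ℱ₂ k) μ ((X k ⁻¹' B).indicator 1) +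
          2 * μ.real (symmDiff (X k ⁻¹' A) (X k ⁻¹' B)) :=
        condExpDist_indicator_le ((hX k).measurable hA) ((hX k).measurable hBm)
          (measure_preimage_ne_top hA) (measure_preimage_ne_top hBm)
    _ = condExpDist (ℱ₁ k) (ℱ₂ k) μ ((X k ⁻¹' B).indicator 1) + 2 * ν.real (symmDiff A B) := by
        rw [← Set.preimage_symmDiff,
          (hX k).measureReal_preimage (hA.symmDiff hBm).nullMeasurableSet]
    _ < ε := by linarith

end CondExpDist

section Window

variable {E : Type*}

/-- The restriction of a configuration on `ℤ` to the sites `-m, …, m`, re-indexed from `0`. -/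
def window (m : ℕ) (x : ℤ → E) : Fin (2 * m + 1) → E :=
  fun i => x ((i : ℤ) - (m : ℤ))

lemma exists_forall_mem_natAbs_le (s : Finset ℤ) : ∃ m : ℕ, 1 ≤ m ∧ ∀ i ∈ s, i.natAbs ≤ m :=
  ⟨max 1 (s.sup Int.natAbs), le_max_left _ _, fun _ hi => le_max_of_le_right (Finset.le_sup hi)⟩

lemma exists_cylinder_eq_preimage_window [MeasurableSpace E] (s : Finset ℤ) {S : Set (s → E)}
    (hS : MeasurableSet S) :
    ∃ m : ℕ, 1 ≤ m ∧ ∃ T : Set (Fin (2 * m + 1) → E), MeasurableSet T ∧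
      cylinder s S = window m ⁻¹' T := by
  obtain ⟨m, hm, hsm⟩ := exists_forall_mem_natAbs_le s
  let site (i : s) : Fin (2 * m + 1) := ⟨(i.1 + m).toNat, by have := hsm i.1 i.2; omega⟩
  have window_site (x : ℤ → E) : (fun i => window m x (site i)) = s.restrict x := by
    funext i
    have site_sub : ((site i : ℕ) : ℤ) - m = i.1 := by
      have := hsm i.1 i.2
      simp only [site]
      omega
    exact congrArg x site_sub
  refine ⟨m, hm, (fun y i => y (site i)) ⁻¹' S, ?_, ?_⟩
  · exact (measurable_pi_lambda _ fun i => measurable_pi_apply (site i)) hS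
  · ext x
    simp only [mem_cylinder, Set.mem_preimage, window_site]

end Window

/-- The sub-σ-algebras are bundled as elements of `Set.Iic mα` because `μ[f|m]` is the junk value
`0` when `m ≤ mα` fails. -/
theorem statement6_general {α E κ : Type*} {mα : MeasurableSpace α} [MeasurableSpace E]
    {μ : Measure α} {ν : Measure (ℤ → E)} [IsFiniteMeasure ν] {l : Filter κ} {X : κ → α → ℤ → E}
    (hX : ∀ k, MeasurePreserving (X k) μ ν) (𝒢 ℋ : κ → Set.Iic mα)
    (hwindow : ∀ m : ℕ, 1 ≤ m → ∀ T : Set (Fin (2 * m + 1) → E), MeasurableSet T →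
      Tendsto (fun k => condExpDist (𝒢 k) (ℋ k) μ ((X k ⁻¹' (window m ⁻¹' T)).indicator 1))
        l (nhds 0))
    {A : Set (ℤ → E)} (hA : MeasurableSet A) :
    Tendsto (fun k => condExpDist (𝒢 k) (ℋ k) μ ((X k ⁻¹' A).indicator 1)) l (nhds 0) := by
  refine tendsto_condExpDist_of_isSetAlgebra hX
    (isSetAlgebra_measurableCylinders (α := fun _ : ℤ => E))
    generateFrom_measurableCylinders.symm (fun B hB => ?_) hA
  obtain ⟨s, S, hS, rfl⟩ := (mem_measurableCylinders B).1 hB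
  obtain ⟨m, hm, T, hT, cylinder_eq⟩ := exists_cylinder_eq_preimage_window s hS
  rw [cylinder_eq]
  exact hwindow m hm T hT

/-- **Lemma 3.8.**  Let `(X_k, Y_k)_{k∈ℤ}` be a stationary process with
`X_k ∈ {-1,1}^ℤ` and `Y_k` in a standard Borel space.  If the finite-dimensional marginals
of the filter are stable, then the filter is stable. -/
theorem statement6 {F : Type*} [MeasurableSpace F] [StandardBorelSpace F]
    (P : Measure Ω) [IsProbabilityMeasure P]
    (X : ℤ → Ω → ℤ → ℝ) (Y : ℤ → Ω → F)
    (hXm : ∀ k, Measurable (X k)) (hYm : ∀ k, Measurable (Y k))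
    (hXval : ∀ k ω v, X k ω v = 1 ∨ X k ω v = -1)
    (hstat : P.map (fun ω => fun k : ℤ => (X (k + 1) ω, Y (k + 1) ω)) =
      P.map (fun ω => fun k : ℤ => (X k ω, Y k ω)))
    (hfd : ∀ m : ℕ, 1 ≤ m → ∀ f : (Fin (2 * m + 1) → ℝ) → ℝ,
      Tendsto (fun k : ℕ =>
          ∫ ω, |(P[(fun ω' => f fun i => X (k : ℤ) ω' ((i : ℤ) - (m : ℤ)))|
                    MeasurableSpace.comap (X 0) inferInstance ⊔ obsσ Y k]) ω
              - (P[(fun ω' => f fun i => X (k : ℤ) ω' ((i : ℤ) - (m : ℤ)))|obsσ Y k]) ω| ∂P)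
        atTop (nhds 0)) :
    ∀ A : Set (ℤ → ℝ), MeasurableSet A →
      Tendsto (fun k : ℕ =>
          ∫ ω, |(P[(fun ω' => A.indicator (fun _ => (1 : ℝ)) (X (k : ℤ) ω'))|
                    MeasurableSpace.comap (X 0) inferInstance ⊔ obsσ Y k]) ω
              - (P[(fun ω' => A.indicator (fun _ => (1 : ℝ)) (X (k : ℤ) ω'))|obsσ Y k]) ω| ∂P)
        atTop (nhds 0) := by
  intro A hA
  have hlaw (k : ℤ) : P.map (X k) = P.map (X 0) :=
    ((identDistrib_zero_of_stationary (fun k => (hXm k).prodMk (hYm k)) hstat k).comp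
      measurable_fst).map_eq
  exact statement6_general (fun k : ℕ => ⟨hXm k, hlaw k⟩)
    (fun k => ⟨_, sup_le (hXm 0).comap_le (obsσ_le hYm k)⟩) (fun k => ⟨_, obsσ_le hYm k⟩)
    (fun m hm T _ => hfd m hm (T.indicator 1)) hA

end InfFilter
end
end

section
/- For every bounded continuous function f : ℝ^{m+1} → ℝ there exists a sequence of bounded continuous functions g_n : ℝ^{m+1} → ℝ such that E| E[ g_n( n ∫_0^{1/n} X_s ds + G_n ) | σ(X) ] − f(X_0) | → 0 as n → ∞. -/
open MeasureTheory ProbabilityTheory Filter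

noncomputable section

namespace InfFilter

/-!
Gaussian noise of variance `v` multiplies `sin (c x)` by `exp (-v c² / 2)`, so after rescaling by
the inverse factor the sine of a noisy observation is an unbiased estimator of the sine of the
signal. Every function on `{-1, 1}^ι` is the restriction of a polynomial that is affine in each
coordinate; expectations over independent coordinates pass through such a polynomial, and
`sin (π / 2 * e) = e` for `e = ±1`. Composing the two gives bounded continuous functions `g_n` with
`E[g_n(Y_n + G_n) | σ(X)] = k(Y_n)`, where `Y_n` is the average of `X` over `[0, 1 / n]` and the
fixed bounded continuous function `k` agrees with `f` on the cube. Right-continuity gives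
`Y_n → X_0`, and dominated convergence concludes.
-/

open scoped NNReal Topology

section MultilinearExtension

variable {ι : Type*} [Fintype ι] [DecidableEq ι]

/-- The multilinear extension of a function on the discrete cube `{-1, 1}^ι`: the polynomial of
degree at most one in each variable which agrees with `f` on the cube. The function `f` is given on
all of `ι → ℝ`, but only its values on the cube enter. -/
def multilinearExtension (f : (ι → ℝ) → ℝ) (y : ι → ℝ) : ℝ :=
  ∑ e ∈ Fintype.piFinset fun _ => {1, -1}, f e * ∏ i, (1 + e i * y i) / 2

lemma continuous_multilinearExtension (f : (ι → ℝ) → ℝ) : Continuous (multilinearExtension f) := by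
  unfold multilinearExtension
  fun_prop

lemma multilinearExtension_eq_self (f : (ι → ℝ) → ℝ) {x : ι → ℝ} (hx : ∀ i, x i = 1 ∨ x i = -1) :
    multilinearExtension f x = f x := by
  have weight_self (i : ι) : (1 + x i * x i) / 2 = 1 := by
    rcases hx i with h | h <;> norm_num [h]
  have weight_of_ne {e : ι → ℝ} (he : ∀ i, e i = 1 ∨ e i = -1) (hne : e ≠ x) :
      ∏ i, (1 + e i * x i) / 2 = 0 := by
    obtain ⟨i, hi⟩ := Function.ne_iff.1 hne
    refine Finset.prod_eq_zero (Finset.mem_univ i) ?_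
    rcases hx i with h | h <;> rcases he i with h' | h' <;> simp_all
  rw [multilinearExtension, Finset.sum_eq_single x]
  · simp only [weight_self, Finset.prod_const_one, mul_one]
  · intro e he hne
    rw [weight_of_ne (by simpa using he) hne, mul_zero]
  · exact fun hx' => absurd (by simpa using hx) hx'

lemma integral_multilinearExtension_pi {α : ι → Type*} [∀ i, MeasurableSpace (α i)]
    {μ : ∀ i, Measure (α i)} [∀ i, IsProbabilityMeasure (μ i)] (f : (ι → ℝ) → ℝ)
    {φ : ∀ i, α i → ℝ} (hφ : ∀ i, Integrable (φ i) (μ i)) :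
    ∫ z, multilinearExtension f (fun i => φ i (z i)) ∂Measure.pi μ =
      multilinearExtension f fun i => ∫ z, φ i z ∂μ i := by
  have integrable_weight (c : ℝ) (i : ι) : Integrable (fun z => (1 + c * φ i z) / 2) (μ i) :=
    ((integrable_const 1).add ((hφ i).const_mul c)).div_const 2
  have integral_weight (c : ℝ) (i : ι) :
      ∫ z, (1 + c * φ i z) / 2 ∂μ i = (1 + c * ∫ z, φ i z ∂μ i) / 2 := by
    rw [integral_div, integral_add (integrable_const 1) ((hφ i).const_mul c), integral_const_mul]
    simp
  unfold multilinearExtension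
  rw [integral_finsetSum _ fun e _ =>
    (Integrable.fintype_prod_dep fun i => integrable_weight (e i) i).const_mul (f e)]
  refine Finset.sum_congr rfl fun e _ => ?_
  rw [integral_const_mul, integral_fintype_prod_eq_prod fun i z => (1 + e i * φ i z) / 2]
  simp only [integral_weight]

end MultilinearExtension

lemma integral_sin_mul_gaussianReal (μ : ℝ) (v : ℝ≥0) (c : ℝ) :
    ∫ x, Real.sin (c * x) ∂gaussianReal μ v =
      Real.exp (-(v * c ^ 2 / 2)) * Real.sin (c * μ) := by
  have integrable_exp :
      Integrable (fun x : ℝ => Complex.exp (c * x * Complex.I)) (gaussianReal μ v) := by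
    refine Integrable.of_bound (C := 1) (by fun_prop) (ae_of_all _ fun x => ?_)
    rw [← Complex.ofReal_mul, Complex.norm_exp_ofReal_mul_I]
  calc ∫ x, Real.sin (c * x) ∂gaussianReal μ v
      = ∫ x : ℝ, (Complex.exp (c * x * Complex.I)).im ∂gaussianReal μ v := by
        simp only [← Complex.ofReal_mul, Complex.exp_ofReal_mul_I_im]
    _ = (charFun (gaussianReal μ v) c).im := by
        rw [charFun_apply_real]
        exact integral_im integrable_exp
    _ = Real.exp (-(v * c ^ 2 / 2)) * Real.sin (c * μ) := by
        rw [charFun_gaussianReal, Complex.exp_im]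
        congr 2 <;> simp [← Complex.ofReal_pow]

lemma integral_sin_mul_add_gaussianReal (v : ℝ≥0) (c y : ℝ) :
    ∫ z, Real.sin (c * (y + z)) ∂gaussianReal 0 v =
      Real.exp (-(v * c ^ 2 / 2)) * Real.sin (c * y) := by
  have hshift : (gaussianReal 0 v).map (y + ·) = gaussianReal y v := by
    rw [gaussianReal_map_const_add, zero_add]
  rw [← integral_sin_mul_gaussianReal, ← hshift, integral_map (by fun_prop) (by fun_prop)]

section SineInterpolant

variable {ι : Type*} [Fintype ι] [DecidableEq ι]

/-- The multilinear extension of `f` evaluated at `a * sin (π / 2 * x i)`. For `a = 1` it is a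
bounded interpolation of `f` on the cube `{-1, 1}^ι`; a larger amplitude `a` compensates for the
damping of the sines by Gaussian noise. -/
def sineInterpolant (f : (ι → ℝ) → ℝ) (a : ℝ) (x : ι → ℝ) : ℝ :=
  multilinearExtension f fun i => a * Real.sin (Real.pi / 2 * x i)

lemma continuous_sineInterpolant (f : (ι → ℝ) → ℝ) (a : ℝ) : Continuous (sineInterpolant f a) :=
  (continuous_multilinearExtension f).comp (by fun_prop)

lemma exists_abs_sineInterpolant_le (f : (ι → ℝ) → ℝ) (a : ℝ) :
    ∃ C, ∀ x, |sineInterpolant f a x| ≤ C := by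
  obtain ⟨C, hC⟩ := (isCompact_closedBall (0 : ι → ℝ) |a|).exists_bound_of_continuousOn
    (continuous_multilinearExtension f).continuousOn
  refine ⟨C, fun x => hC _ ?_⟩
  rw [mem_closedBall_zero_iff, pi_norm_le_iff_of_nonneg (abs_nonneg a)]
  intro i
  rw [Real.norm_eq_abs, abs_mul]
  exact mul_le_of_le_one_right (abs_nonneg a) (Real.abs_sin_le_one _)

lemma sineInterpolant_one_eq_self (f : (ι → ℝ) → ℝ) {x : ι → ℝ} (hx : ∀ i, x i = 1 ∨ x i = -1) :
    sineInterpolant f 1 x = f x := by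
  have sin_eq (i : ι) : 1 * Real.sin (Real.pi / 2 * x i) = x i := by
    rcases hx i with h | h <;> simp [h]
  simp only [sineInterpolant, sin_eq, multilinearExtension_eq_self f hx]

lemma integral_sineInterpolant_add_gaussianReal (f : (ι → ℝ) → ℝ) (v : ℝ≥0) (y : ι → ℝ) :
    ∫ z, sineInterpolant f (Real.exp (v * (Real.pi / 2) ^ 2 / 2)) (y + z)
      ∂Measure.pi (fun _ : ι => gaussianReal 0 v) = sineInterpolant f 1 y := by
  have integrable_sin (i : ι) :
      Integrable (fun z => Real.sin (Real.pi / 2 * (y i + z))) (gaussianReal 0 v) :=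
    Integrable.of_bound (C := 1) (by fun_prop) (ae_of_all _ fun z => Real.abs_sin_le_one _)
  simp only [sineInterpolant, Pi.add_apply]
  rw [integral_multilinearExtension_pi f fun i => (integrable_sin i).const_mul _]
  congr! 2 with i
  rw [integral_const_mul, integral_sin_mul_add_gaussianReal, ← mul_assoc, ← Real.exp_add,
    add_neg_cancel, Real.exp_zero]

end SineInterpolant

section CondExpIndep

variable {Ω β E F : Type*} {m mΩ : MeasurableSpace Ω} {P : Measure Ω} [IsFiniteMeasure P]
  {mβ : MeasurableSpace β} [MeasurableSpace E] [StandardBorelSpace E] [Nonempty E]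
  [NormedAddCommGroup F] [NormedSpace ℝ F] [CompleteSpace F]

lemma condDistrib_ae_eq_const_of_indepFun {Z : Ω → β} {G : Ω → E} (hZ : AEMeasurable Z P)
    (hG : AEMeasurable G P) (hind : IndepFun Z G P) :
    condDistrib G Z P =ᵐ[P.map Z] Kernel.const β (P.map G) := by
  refine condDistrib_ae_eq_of_measure_eq_compProd Z hG ?_
  rw [(indepFun_iff_map_prod_eq_prod_map_map hZ hG).1 hind, Measure.compProd_const]

lemma condExp_prodMk_ae_eq_integral_map_of_indepFun {Z : Ω → β} {G : Ω → E} (hZ : Measurable Z)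
    (hG : AEMeasurable G P) (hind : IndepFun Z G P) {φ : β × E → F} (hφ : StronglyMeasurable φ)
    (hint : Integrable (fun ω => φ (Z ω, G ω)) P) :
    P[fun ω => φ (Z ω, G ω) | mβ.comap Z] =ᵐ[P] fun ω => ∫ z, φ (Z ω, z) ∂P.map G := by
  filter_upwards [condExp_prod_ae_eq_integral_condDistrib hZ hG hφ hint,
    ae_of_ae_map hZ.aemeasurable (condDistrib_ae_eq_const_of_indepFun hZ.aemeasurable hG hind)]
    with ω hcondExp hcondDistrib
  rw [hcondExp, hcondDistrib, Kernel.const_apply]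

lemma condExp_prodMk_ae_eq_integral_map_of_indep (hm : m ≤ mΩ) {Y : Ω → β} {G : Ω → E}
    (hY : Measurable[m] Y) (hG : AEMeasurable G P)
    (hind : Indep m (MeasurableSpace.comap G inferInstance) P) {φ : β × E → F}
    (hφ : StronglyMeasurable φ) (hint : Integrable (fun ω => φ (Y ω, G ω)) P) :
    P[fun ω => φ (Y ω, G ω) | m] =ᵐ[P] fun ω => ∫ z, φ (Y ω, z) ∂P.map G := by
  -- Conditioning on `m` is conditioning on the identity map into `(Ω, m)`.
  have hind_id : @IndepFun Ω Ω E mΩ m _ id G P := by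
    rwa [IndepFun_iff_Indep (mβ := m), MeasurableSpace.comap_id]
  have hφY : @StronglyMeasurable (Ω × E) F _ (m.prod inferInstance) fun q => φ (Y q.1, q.2) :=
    hφ.comp_measurable ((hY.comp measurable_fst).prodMk measurable_snd)
  simpa only [id, MeasurableSpace.comap_id] using
    condExp_prodMk_ae_eq_integral_map_of_indepFun (mβ := m) (measurable_id'' hm) hG hind_id hφY hint

end CondExpIndep

lemma condExp_sineInterpolant_add_gaussian {Ω ι : Type*} [Fintype ι] [DecidableEq ι]
    {m mΩ : MeasurableSpace Ω} {P : Measure Ω} [IsFiniteMeasure P] (hm : m ≤ mΩ)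
    {Y G : Ω → ι → ℝ} (hY : Measurable[m] Y) (hG : Measurable G)
    (hind : Indep m (MeasurableSpace.comap G inferInstance) P) {v : ℝ≥0}
    (hlaw : P.map G = Measure.pi fun _ => gaussianReal 0 v) (f : (ι → ℝ) → ℝ) :
    P[fun ω => sineInterpolant f (Real.exp (v * (Real.pi / 2) ^ 2 / 2)) (Y ω + G ω) | m]
      =ᵐ[P] fun ω => sineInterpolant f 1 (Y ω) := by
  set g := sineInterpolant f (Real.exp (v * (Real.pi / 2) ^ 2 / 2)) with hg
  have hgm : Measurable g := (continuous_sineInterpolant f _).measurable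
  obtain ⟨C, hC⟩ := exists_abs_sineInterpolant_le f (Real.exp (v * (Real.pi / 2) ^ 2 / 2))
  have hint : Integrable (fun ω => g (Y ω + G ω)) P :=
    Integrable.of_bound (hgm.comp ((hY.mono hm le_rfl).add hG)).aestronglyMeasurable C
      (ae_of_all _ fun ω => hC _)
  have hφ : StronglyMeasurable fun q : (ι → ℝ) × (ι → ℝ) => g (q.1 + q.2) :=
    (hgm.comp (measurable_fst.add measurable_snd)).stronglyMeasurable
  refine (condExp_prodMk_ae_eq_integral_map_of_indep hm hY hG.aemeasurable hind hφ hint).trans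
    (ae_of_all _ fun ω => ?_)
  simp only [hlaw, hg, integral_sineInterpolant_add_gaussianReal]

lemma tendsto_ceil_mul_div_nhdsGE (t : ℝ) :
    Tendsto (fun k : ℕ => (⌈((k : ℝ) + 1) * t⌉ : ℝ) / ((k : ℝ) + 1)) atTop (𝓝[≥] t) := by
  have lower (k : ℕ) : t ≤ (⌈((k : ℝ) + 1) * t⌉ : ℝ) / ((k : ℝ) + 1) := by
    rw [le_div_iff₀ (by positivity), mul_comm]
    exact Int.le_ceil _
  have upper (k : ℕ) : (⌈((k : ℝ) + 1) * t⌉ : ℝ) / ((k : ℝ) + 1) ≤ t + 1 / ((k : ℝ) + 1) := by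
    rw [div_le_iff₀ (by positivity), add_mul t, one_div_mul_cancel (by positivity), mul_comm t]
    exact (Int.ceil_lt_add_one _).le
  have upper_tendsto : Tendsto (fun k : ℕ => t + 1 / ((k : ℝ) + 1)) atTop (𝓝 t) := by
    simpa using tendsto_one_div_add_atTop_nhds_zero_nat.const_add t
  exact tendsto_nhdsWithin_iff.2
    ⟨tendsto_of_tendsto_of_tendsto_of_le_of_le tendsto_const_nhds upper_tendsto lower upper,
      Eventually.of_forall lower⟩

lemma measurable_uncurry_of_continuousWithinAt_Ici {Ω E : Type*} [MeasurableSpace Ω]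
    [TopologicalSpace E] [TopologicalSpace.PseudoMetrizableSpace E] [MeasurableSpace E]
    [BorelSpace E] {X : ℝ → Ω → E} (hX : ∀ t, Measurable (X t))
    (hXrc : ∀ ω t, ContinuousWithinAt (fun u => X u ω) (Set.Ici t) t) :
    Measurable (Function.uncurry X) := by
  refine measurable_of_tendsto_metrizable
    (f := fun (k : ℕ) (q : ℝ × Ω) => X (⌈((k : ℝ) + 1) * q.1⌉ / ((k : ℝ) + 1)) q.2)
    (fun k => ?_) (tendsto_pi_nhds.2 fun q =>
      (hXrc q.2 q.1).tendsto.comp (tendsto_ceil_mul_div_nhdsGE q.1))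
  have on_grid : Measurable fun r : ℤ × Ω => X ((r.1 : ℝ) / ((k : ℝ) + 1)) r.2 :=
    measurable_from_prod_countable_right fun z => hX (z / ((k : ℝ) + 1))
  have to_grid : Measurable fun q : ℝ × Ω => (⌈((k : ℝ) + 1) * q.1⌉, q.2) := by fun_prop
  exact on_grid.comp to_grid

lemma measurable_intervalIntegral_of_continuousWithinAt_Ici {Ω E : Type*} [MeasurableSpace Ω]
    [NormedAddCommGroup E] [NormedSpace ℝ E] [SecondCountableTopology E] [MeasurableSpace E]
    [BorelSpace E] {X : ℝ → Ω → E} (hX : ∀ t, Measurable (X t))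
    (hXrc : ∀ ω t, ContinuousWithinAt (fun u => X u ω) (Set.Ici t) t) (a b : ℝ) :
    Measurable fun ω => ∫ t in a..b, X t ω := by
  have hX' := (measurable_uncurry_of_continuousWithinAt_Ici hX hXrc).stronglyMeasurable
  exact (hX'.integral_prod_left'.sub hX'.integral_prod_left').measurable

lemma tendsto_nat_smul_intervalIntegral_of_continuousWithinAt_Ici {E : Type*}
    [NormedAddCommGroup E] [NormedSpace ℝ E] [CompleteSpace E] {x : ℝ → E} {a : ℝ}
    (hx : StronglyMeasurableAtFilter x (𝓝[>] a)) (hc : ContinuousWithinAt x (Set.Ici a) a) :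
    Tendsto (fun n : ℕ => (n : ℝ) • ∫ t in a..a + 1 / (n : ℝ), x t) atTop (𝓝 (x a)) := by
  have hderiv : HasDerivWithinAt (fun u => ∫ t in a..u, x t) (x a) (Set.Ioi a) a :=
    (intervalIntegral.integral_hasDerivWithinAt_right (by simp) (s := Set.Ici a) hx
      (hc.mono Set.Ioi_subset_Ici_self)).mono Set.Ioi_subset_Ici_self
  rw [hasDerivWithinAt_iff_tendsto_slope' Set.self_notMem_Ioi] at hderiv
  have hlim : Tendsto (fun n : ℕ => a + 1 / (n : ℝ)) atTop (𝓝[>] a) := by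
    refine tendsto_nhdsWithin_iff.2
      ⟨by simpa using tendsto_one_div_atTop_nhds_zero_nat.const_add a, ?_⟩
    filter_upwards [eventually_gt_atTop 0] with n hn
    simpa using hn
  refine (hderiv.comp hlim).congr fun n => ?_
  simp [slope_def_module]

section InitialAverage

variable {ι : Type*}

/-- The componentwise average of the path `x` over `[0, 1 / n]`, with value `0` at `n = 0`. -/
def initialAverage (x : ℝ → ι → ℝ) (n : ℕ) (i : ι) : ℝ :=
  n * ∫ t in (0 : ℝ)..(1 / (n : ℝ)), x t i

lemma measurable_initialAverage {Ω : Type*} {_ : MeasurableSpace Ω} {X : ℝ → Ω → ι → ℝ}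
    (hX : ∀ t, Measurable (X t))
    (hXrc : ∀ ω t, ContinuousWithinAt (fun u => X u ω) (Set.Ici t) t) (n : ℕ) :
    Measurable fun ω => initialAverage (fun t => X t ω) n := by
  refine measurable_pi_lambda _ fun i => Measurable.const_mul ?_ _
  exact measurable_intervalIntegral_of_continuousWithinAt_Ici
    (fun t => measurable_pi_iff.1 (hX t) i)
    (fun ω t => continuousWithinAt_pi.1 (hXrc ω t) i) 0 (1 / n)

lemma tendsto_initialAverage {x : ℝ → ι → ℝ} (hx : Measurable x)
    (hc : ContinuousWithinAt x (Set.Ici 0) 0) :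
    Tendsto (initialAverage x) atTop (𝓝 (x 0)) := by
  refine tendsto_pi_nhds.2 fun i => ?_
  simpa [initialAverage] using tendsto_nat_smul_intervalIntegral_of_continuousWithinAt_Ici
    (measurable_pi_iff.1 hx i).stronglyMeasurable.stronglyMeasurableAtFilter
    (continuousWithinAt_pi.1 hc i)

end InitialAverage

lemma tendsto_integral_abs_comp_sub {Ω E : Type*} [MeasurableSpace Ω] {P : Measure Ω}
    [IsFiniteMeasure P] [TopologicalSpace E] {k : E → ℝ} (hk : Continuous k)
    (hkb : ∃ C, ∀ x, |k x| ≤ C) {Y : ℕ → Ω → E} {Z : Ω → E}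
    (hY : ∀ n, AEStronglyMeasurable (Y n) P)
    (hlim : ∀ᵐ ω ∂P, Tendsto (fun n => Y n ω) atTop (𝓝 (Z ω))) :
    Tendsto (fun n => ∫ ω, |k (Y n ω) - k (Z ω)| ∂P) atTop (𝓝 0) := by
  obtain ⟨C, hC⟩ := hkb
  have hkY (n : ℕ) : AEStronglyMeasurable (fun ω => k (Y n ω)) P :=
    hk.comp_aestronglyMeasurable (hY n)
  have hklim : ∀ᵐ ω ∂P, Tendsto (fun n => k (Y n ω)) atTop (𝓝 (k (Z ω))) :=
    hlim.mono fun ω hω => (hk.tendsto _).comp hω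
  have hkZ : AEStronglyMeasurable (fun ω => k (Z ω)) P :=
    aestronglyMeasurable_of_tendsto_ae atTop hkY hklim
  have hdom := tendsto_integral_of_dominated_convergence
    (F := fun n ω => |k (Y n ω) - k (Z ω)|) (f := fun _ => 0) (fun _ => C + C)
    (fun n => ((hkY n).sub hkZ).norm) (integrable_const _)
    (fun n => ae_of_all _ fun ω => by
      rw [Real.norm_eq_abs, abs_abs]
      exact (abs_sub _ _).trans (add_le_add (hC _) (hC _)))
    (hklim.mono fun ω hω => by simpa using (hω.sub_const (k (Z ω))).abs)
  simpa using hdom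

theorem statement12_general {Ω ι : Type*} [MeasurableSpace Ω] [Fintype ι] (P : Measure Ω)
    [IsProbabilityMeasure P] (v : ℕ → ℝ≥0) (X : ℝ → Ω → ι → ℝ) (hX : ∀ t, Measurable (X t))
    (hXrc : ∀ ω t, ContinuousWithinAt (fun u => X u ω) (Set.Ici t) t)
    (hX₀ : ∀ᵐ ω ∂P, ∀ i, X 0 ω i = 1 ∨ X 0 ω i = -1)
    (G : ℕ → Ω → ι → ℝ) (hG : ∀ n, Measurable (G n))
    (hGlaw : ∀ n, 1 ≤ n → P.map (G n) = Measure.pi fun _ => gaussianReal 0 (v n))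
    (hGindep : ∀ n, 1 ≤ n → IndepFun (G n) (fun ω => fun t : ℝ => X t ω) P)
    (f : (ι → ℝ) → ℝ) :
    ∃ g : ℕ → (ι → ℝ) → ℝ,
      (∀ n, Continuous (g n) ∧ ∃ C, ∀ x, |g n x| ≤ C) ∧
      Tendsto (fun n : ℕ =>
          ∫ ω, |(P[(fun ω' => g n fun i =>
                    (n : ℝ) * (∫ t in (0 : ℝ)..(1 / (n : ℝ)), X t ω' i) + G n ω' i)|
                  MeasurableSpace.comap (fun ω' => fun t : ℝ => X t ω') inferInstance]) ω
              - f (X 0 ω)| ∂P)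
        atTop (𝓝 0) := by
  classical
  have hle : MeasurableSpace.comap (fun ω t => X t ω) inferInstance ≤ ‹MeasurableSpace Ω› :=
    (measurable_pi_lambda _ hX).comap_le
  have hY (n : ℕ) : Measurable[MeasurableSpace.comap (fun ω t => X t ω) inferInstance]
      fun ω => initialAverage (fun t => X t ω) n :=
    measurable_initialAverage (fun t => (measurable_pi_apply t).comp (comap_measurable _)) hXrc n
  have hpath (ω : Ω) : Measurable fun t => X t ω :=
    (measurable_uncurry_of_continuousWithinAt_Ici hX hXrc).comp measurable_prodMk_right
  have hlim := tendsto_integral_abs_comp_sub (P := P) (continuous_sineInterpolant f 1)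
    (exists_abs_sineInterpolant_le f 1)
    (fun n => ((hY n).mono hle le_rfl).aestronglyMeasurable)
    (ae_of_all P fun ω => tendsto_initialAverage (hpath ω) (hXrc ω 0))
  refine ⟨fun n => sineInterpolant f (Real.exp (v n * (Real.pi / 2) ^ 2 / 2)),
    fun n => ⟨continuous_sineInterpolant f _, exists_abs_sineInterpolant_le f _⟩,
    hlim.congr' ?_⟩
  filter_upwards [eventually_ge_atTop 1] with n hn
  have hcond := condExp_sineInterpolant_add_gaussian hle (hY n) (hG n)
    ((IndepFun_iff_Indep _ _ _).1 (hGindep n hn).symm) (hGlaw n hn) f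
  refine integral_congr_ae ?_
  filter_upwards [hcond, hX₀] with ω hω hω₀
  exact congrArg₂ (fun x y => |x - y|) hω.symm (sineInterpolant_one_eq_self f hω₀)

/-- **Lemma 4.12.**  Let `X` be a jointly measurable `{-1,1}^{m+1}`-valued process with
right-continuous paths and let `G_n` be centered Gaussian vectors with covariance `σ²n·Id`,
independent of `X`.  For every bounded continuous `f` there are bounded continuous `g_n` with
`E|E[g_n(n ∫_0^{1/n} X_s ds + G_n) | σ(X)] − f(X_0)| → 0`. -/
theorem statement12 {Ω : Type*} [MeasurableSpace Ω] (P : Measure Ω) [IsProbabilityMeasure P]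
    (m : ℕ) (s : ℝ) (hs : 0 < s)
    (X : ℝ → Ω → Fin (m + 1) → ℝ)
    (hXmeas : Measurable fun q : ℝ × Ω => X q.1 q.2)
    (hXrc : ∀ ω t, ContinuousWithinAt (fun u => X u ω) (Set.Ici t) t)
    (hXval : ∀ t ω i, X t ω i = 1 ∨ X t ω i = -1)
    (G : ℕ → Ω → Fin (m + 1) → ℝ) (hGmeas : ∀ n, Measurable (G n))
    (hGlaw : ∀ n : ℕ, 1 ≤ n →
      P.map (G n) = Measure.pi fun _ : Fin (m + 1) =>
        gaussianReal 0 ((s ^ 2 * (n : ℝ)).toNNReal))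
    (hGindep : ∀ n : ℕ, 1 ≤ n →
      IndepFun (G n) (fun ω => fun t : ℝ => X t ω) P)
    (f : (Fin (m + 1) → ℝ) → ℝ) (hf : Continuous f) (hfb : ∃ C, ∀ x, |f x| ≤ C) :
    ∃ g : ℕ → (Fin (m + 1) → ℝ) → ℝ,
      (∀ n, Continuous (g n) ∧ ∃ C, ∀ x, |g n x| ≤ C) ∧
      Tendsto (fun n : ℕ =>
          ∫ ω, |(P[(fun ω' => g n fun i =>
                    (n : ℝ) * (∫ t in (0 : ℝ)..(1 / (n : ℝ)), X t ω' i) + G n ω' i)|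
                  MeasurableSpace.comap (fun ω' => fun t : ℝ => X t ω') inferInstance]) ω
              - f (X 0 ω)| ∂P)
        atTop (nhds 0) :=
  statement12_general P _ X (fun _ => hXmeas.comp measurable_prodMk_left) hXrc
    (ae_of_all P (hXval 0)) G hGmeas hGlaw hGindep f

end InfFilter
end
end

section
/- For every y ∈ F^{ℤ^d}, the family γ^y = (γ_V^y), indexed by finite V ⊂ ℤ^d, is again a specification: it satisfies properties (1), (2), (3); in particular the consistency identity γ_V^y γ_W^y = γ_V^y holds for all finite W ⊂ V ⊂ ℤ^d. -/
open MeasureTheory Filter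

noncomputable section

namespace RandomField

/-- Sites of the lattice `ℤ^d`. -/
abbrev Site (d : ℕ) := Fin d → ℤ

variable {E : Type*} [MeasurableSpace E] {d : ℕ}

/-- Configurations `E^{ℤ^d}`. -/
abbrev Conf (E : Type*) (d : ℕ) := Site d → E

/-- The cylinder σ-algebra `σ(X_S)` on `E^{ℤ^d}` generated by the coordinates in `S`. -/
def cylσ (E : Type*) [MeasurableSpace E] {d : ℕ} (S : Set (Site d)) :
    MeasurableSpace (Conf E d) :=
  ⨆ v ∈ S, MeasurableSpace.comap (fun x : Conf E d => x v) inferInstance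

/-- Nearest neighbors: `‖v - w‖ = 1`. -/
def Adj (v w : Site d) : Prop := (∑ i, (v i - w i).natAbs) = 1

/-- The exterior boundary `∂V` of a finite set of sites `V`. -/
def bdry (V : Finset (Site d)) : Set (Site d) := {w | w ∉ V ∧ ∃ v ∈ V, Adj v w}

/-- A specification: a family of probability kernels `γ_V` indexed by finite `V ⊂ ℤ^d` with
(1) `γ_V(·, A)` is `σ(X_{∂V})`-measurable for `A ∈ σ(X_V)`;
(2) `γ_V(x, A) = 1_A(x)` for `A ∈ σ(X_{V^c})`;
(3) `γ_V γ_W = γ_V` for `W ⊆ V`. -/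
structure IsSpecification (γ : Finset (Site d) → Conf E d → Measure (Conf E d)) : Prop where
  prob : ∀ V x, IsProbabilityMeasure (γ V x)
  kernel : ∀ (V) (A : Set (Conf E d)), MeasurableSet A → Measurable fun x => γ V x A
  bdryMeas : ∀ (V : Finset (Site d)) (A : Set (Conf E d)),
    MeasurableSet[cylσ E (↑V : Set (Site d))] A →
    Measurable[cylσ E (bdry V)] fun x => γ V x A
  proper : ∀ (V : Finset (Site d)) (A : Set (Conf E d)),
    MeasurableSet[cylσ E ((↑V : Set (Site d))ᶜ)] A →
    ∀ x, γ V x A = A.indicator (fun _ => (1 : ENNReal)) x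
  consistent : ∀ V W : Finset (Site d), W ⊆ V → ∀ (A : Set (Conf E d)), MeasurableSet A →
    ∀ x, ∫⁻ z, γ W z A ∂(γ V x) = γ V x A

/-- The conditional specification
`γ_V^y(x, A) = ∫ 1_A(z) ∏_{v∈V} g_v(z_v, y_v) γ_V(x, dz) / ∫ ∏_{v∈V} g_v(z_v, y_v) γ_V(x, dz)`,
realized as the normalization of `γ_V(x,·)` reweighted by the observation density. -/
def condKer {F : Type*} (γ : Finset (Site d) → Conf E d → Measure (Conf E d))
    (g : Site d → E → F → ℝ) (y : Site d → F) (V : Finset (Site d)) (x : Conf E d) :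
    Measure (Conf E d) :=
  let ρ := (γ V x).withDensity fun z => ENNReal.ofReal (∏ v ∈ V, g v (z v) (y v))
  (ρ Set.univ)⁻¹ • ρ

/-!
Properties (1) and (2) together make `γ_V` a proper kernel from the exterior σ-algebra `σ(X_{V^c})`:
under `γ_V(x, ·)` an exterior-measurable factor is a constant and can be pulled out of integrals.
For `W ⊆ V` the weight factors as `w_V = w_{V \ W} * w_W`, where `w_{V \ W}` and `γ_W^y(·, A)` are
exterior-measurable for `W`. Writing `γ_V = γ_V γ_W` and pulling both out of the inner integral,
the remaining `∫ w_W dγ_W` cancels the normalization in `γ_W^y`, which is the consistency identity.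
-/

open ProbabilityTheory
open scoped ENNReal

section SupSigmaAlgebra

variable {α : Type*}

lemma isPiSystem_image2_inter {S T : Set (Set α)} (hS : IsPiSystem S) (hT : IsPiSystem T) :
    IsPiSystem (Set.image2 (· ∩ ·) S T) := by
  rintro _ ⟨s, hs, t, ht, rfl⟩ _ ⟨s', hs', t', ht', rfl⟩ hne
  rw [Set.inter_inter_inter_comm] at hne ⊢
  exact Set.mem_image2_of_mem (hS s hs s' hs' hne.left) (hT t ht t' ht' hne.right)

lemma sup_eq_generateFrom_image2_inter (m₁ m₂ : MeasurableSpace α) :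
    m₁ ⊔ m₂ = .generateFrom
      (Set.image2 (· ∩ ·) {s | MeasurableSet[m₁] s} {t | MeasurableSet[m₂] t}) := by
  refine le_antisymm (sup_le (fun s hs ↦ ?_) fun t ht ↦ ?_) (MeasurableSpace.generateFrom_le ?_)
  · exact .basic _ ⟨s, hs, .univ, @MeasurableSet.univ _ m₂, Set.inter_univ s⟩
  · exact .basic _ ⟨.univ, @MeasurableSet.univ _ m₁, t, ht, Set.univ_inter t⟩
  · rintro _ ⟨s, hs, t, ht, rfl⟩
    exact .inter (le_sup_left (a := m₁) s hs) (le_sup_right (a := m₁) t ht)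

lemma cylinderEvents_sup_compl {ι : Type*} {X : ι → Type*} [∀ i, MeasurableSpace (X i)]
    (S : Set ι) :
    cylinderEvents (X := X) S ⊔ cylinderEvents Sᶜ = MeasurableSpace.pi := by
  rw [← cylinderEvents_univ, ← Set.union_compl_self S]
  exact iSup_union.symm

end SupSigmaAlgebra

section ProperFamilies

variable {X : Type*}

lemma measure_inter_eq_indicator_mul [MeasurableSpace X] {μ : Measure X} [IsProbabilityMeasure μ]
    {B : Set X} (hB : MeasurableSet B) {x : X} (hμ : μ B = B.indicator 1 x) (A : Set X) :
    μ (A ∩ B) = B.indicator 1 x * μ A := by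
  by_cases hx : x ∈ B
  · have hB_ae : B =ᵐ[μ] Set.univ := by
      rw [ae_eq_univ, prob_compl_eq_zero_iff hB, hμ, Set.indicator_of_mem hx, Pi.one_apply]
    rw [Set.indicator_of_mem hx, Pi.one_apply, one_mul,
      measure_congr ((ae_eq_refl A).inter hB_ae), Set.inter_univ]
  · rw [Set.indicator_of_notMem hx] at hμ ⊢
    rw [zero_mul, measure_mono_null Set.inter_subset_right hμ]

lemma measurable_of_proper {𝓐 𝓑 𝓧 : MeasurableSpace X} {κ : X → Measure X}
    [∀ x, IsProbabilityMeasure (κ x)] (hsup : 𝓧 = 𝓐 ⊔ 𝓑)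
    (hproper : ∀ B, MeasurableSet[𝓑] B → ∀ x, κ x B = B.indicator 1 x)
    (hmeas : ∀ A, MeasurableSet[𝓐] A → Measurable[𝓑] fun x ↦ κ x A) :
    Measurable[𝓑] κ := by
  refine @Measurable.measure_of_isPiSystem_of_isProbabilityMeasure X X 𝓑 𝓧 κ _ _
    (hsup.trans (sup_eq_generateFrom_image2_inter 𝓐 𝓑))
    (isPiSystem_image2_inter 𝓐.isPiSystem_measurableSet 𝓑.isPiSystem_measurableSet) ?_
  rintro _ ⟨A, hA, B, hB, rfl⟩
  have hB' : MeasurableSet[𝓧] B := hsup ▸ le_sup_right (a := 𝓐) B hB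
  simp only [measure_inter_eq_indicator_mul hB' (hproper B hB _)]
  exact .mul (.indicator measurable_const hB) (hmeas A hA)

end ProperFamilies

section Reweight

variable {α : Type*} {m : MeasurableSpace α} {μ : Measure α} {w : α → ℝ≥0∞}

/-- The measure with density `w` with respect to `μ`, normalized to total mass `1`. It is the zero
measure when `∫ w dμ` is `0` or `∞`. -/
def reweight (μ : Measure α) (w : α → ℝ≥0∞) : Measure α :=
  (∫⁻ z, w z ∂μ)⁻¹ • μ.withDensity w

lemma reweight_apply {A : Set α} (hA : MeasurableSet A) :
    reweight μ w A = (∫⁻ z, w z ∂μ)⁻¹ * ∫⁻ z in A, w z ∂μ := by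
  rw [reweight, Measure.smul_apply, smul_eq_mul, withDensity_apply w hA]

lemma lintegral_reweight (hw : Measurable w) {f : α → ℝ≥0∞} (hf : Measurable f) :
    ∫⁻ z, f z ∂reweight μ w = (∫⁻ z, w z ∂μ)⁻¹ * ∫⁻ z, w z * f z ∂μ := by
  rw [reweight, lintegral_smul_measure, lintegral_withDensity_eq_lintegral_mul _ hw hf]
  rfl

lemma isProbabilityMeasure_reweight (h₀ : ∫⁻ z, w z ∂μ ≠ 0) (h_top : ∫⁻ z, w z ∂μ ≠ ∞) :
    IsProbabilityMeasure (reweight μ w) where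
  measure_univ := by
    rw [reweight_apply .univ, Measure.restrict_univ, ENNReal.inv_mul_cancel h₀ h_top]

lemma measurable_lintegral_of_measurable_apply {β : Type*} {mβ : MeasurableSpace β}
    {m' : MeasurableSpace α} (hm : m' ≤ m) {κ : β → Measure[m] α}
    (hκ : ∀ A, MeasurableSet[m'] A → Measurable fun x ↦ κ x A) {f : α → ℝ≥0∞}
    (hf : Measurable[m'] f) : Measurable fun x ↦ ∫⁻ z, f z ∂κ x := by
  have htrim : Measurable fun x ↦ (κ x).trim hm :=
    Measure.measurable_of_measurable_coe _ fun A hA ↦ by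
      simpa only [trim_measurableSet_eq hm hA] using hκ A hA
  simpa only [Function.comp_def, lintegral_trim hm hf] using
    (Measure.measurable_lintegral hf).comp htrim

lemma measurable_reweight_apply {β : Type*} {mβ : MeasurableSpace β}
    {m' : MeasurableSpace α} (hm : m' ≤ m) {κ : β → Measure[m] α}
    (hκ : ∀ A, MeasurableSet[m'] A → Measurable fun x ↦ κ x A) (hw : Measurable[m'] w)
    {A : Set α} (hA : MeasurableSet[m'] A) : Measurable fun x ↦ reweight (κ x) w A := by
  simp only [reweight_apply (hm A hA), ← lintegral_indicator (hm A hA)]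
  exact (measurable_lintegral_of_measurable_apply hm hκ hw).inv.mul
    (measurable_lintegral_of_measurable_apply hm hκ (hw.indicator hA))

end Reweight

section ReweightProper

variable {X : Type*} {𝓑 𝓧 : MeasurableSpace X} {π : Kernel[𝓑, 𝓧] X X} {w h : X → ℝ≥0∞}
  {A : Set X}

lemma reweight_apply_of_isProper (hπ : π.IsProper) (h𝓑𝓧 : 𝓑 ≤ 𝓧) (hw : Measurable w) {x : X}
    (h₀ : ∫⁻ z, w z ∂π x ≠ 0) (h_top : ∫⁻ z, w z ∂π x ≠ ∞) (hA : MeasurableSet[𝓑] A) :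
    reweight (π x) w A = A.indicator 1 x := by
  rw [reweight_apply (h𝓑𝓧 A hA), hπ.setLIntegral_eq_indicator_mul_lintegral h𝓑𝓧 hw hA,
    mul_left_comm, ENNReal.inv_mul_cancel h₀ h_top, mul_one]

lemma measurable_reweight_kernel_apply (hw : Measurable w) (hA : MeasurableSet A) :
    Measurable[𝓑] fun x ↦ reweight (π x) w A :=
  measurable_reweight_apply le_rfl (fun _ ↦ π.measurable_coe) hw hA

lemma lintegral_mul_reweight_of_isProper (hπ : π.IsProper) (h𝓑𝓧 : 𝓑 ≤ 𝓧) (hw : Measurable w)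
    (hh : Measurable[𝓑] h) {x : X} (h₀ : ∫⁻ z, w z ∂π x ≠ 0) (h_top : ∫⁻ z, w z ∂π x ≠ ∞)
    (hA : MeasurableSet A) :
    ∫⁻ z, h z * w z * reweight (π z) w A ∂π x = ∫⁻ z in A, h z * w z ∂π x := by
  have hr := measurable_reweight_kernel_apply (π := π) hw hA
  calc ∫⁻ z, h z * w z * reweight (π z) w A ∂π x
      = ∫⁻ z, h z * reweight (π z) w A * w z ∂π x := by simp only [mul_right_comm]
    _ = h x * reweight (π x) w A * ∫⁻ z, w z ∂π x := hπ.lintegral_mul h𝓑𝓧 hw (hh.mul hr) x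
    _ = h x * ∫⁻ z in A, w z ∂π x := by
      rw [reweight_apply hA, mul_assoc, mul_right_comm, ENNReal.inv_mul_cancel h₀ h_top, one_mul]
    _ = ∫⁻ z, h z * A.indicator w z ∂π x := by
      rw [hπ.lintegral_mul h𝓑𝓧 (hw.indicator hA) hh, lintegral_indicator hA]
    _ = ∫⁻ z in A, h z * w z ∂π x := by
      simp only [← lintegral_indicator hA, Set.indicator_mul_right]

theorem lintegral_reweight_apply_of_comp_eq (hπ : π.IsProper) (h𝓑𝓧 : 𝓑 ≤ 𝓧) (hw : Measurable w)
    (hh : Measurable[𝓑] h) (h₀ : ∀ x, ∫⁻ z, w z ∂π x ≠ 0) (h_top : ∀ x, ∫⁻ z, w z ∂π x ≠ ∞)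
    {μ : Measure X} (hμ : π ∘ₘ μ = μ) (hA : MeasurableSet A) :
    ∫⁻ z, reweight (π z) w A ∂reweight μ (h * w) = reweight μ (h * w) A := by
  have hhw : Measurable (h * w) := (hh.mono h𝓑𝓧 le_rfl).mul hw
  have hr : Measurable fun z ↦ reweight (π z) w A :=
    (measurable_reweight_kernel_apply hw hA).mono h𝓑𝓧 le_rfl
  have hdisint {f : X → ℝ≥0∞} (hf : Measurable f) :
      ∫⁻ z, f z ∂μ = ∫⁻ x, ∫⁻ z, f z ∂π x ∂μ := by
    rw [← Measure.lintegral_bind (π.measurable.mono h𝓑𝓧 le_rfl).aemeasurable hf.aemeasurable, hμ]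
  rw [lintegral_reweight hhw hr, reweight_apply hA, hdisint (hhw.fun_mul hr),
    ← lintegral_indicator hA, hdisint (hhw.indicator hA)]
  simp only [lintegral_indicator hA, Pi.mul_apply,
    lintegral_mul_reweight_of_isProper hπ h𝓑𝓧 hw hh (h₀ _) (h_top _) hA]

end ReweightProper

section ObsWeight

variable {ι E F : Type*} {g : ι → E → F → ℝ} {y : ι → F}

/-- The observation density `∏_{v ∈ V} g_v(z_v, y_v)` of the configuration `z`, as a weight in
`[0, ∞]`. -/
def obsWeight (g : ι → E → F → ℝ) (y : ι → F) (V : Finset ι) (z : ι → E) : ℝ≥0∞ :=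
  ENNReal.ofReal (∏ v ∈ V, g v (z v) (y v))

lemma obsWeight_ne_zero (hg : ∀ v e, 0 < g v e (y v)) (V : Finset ι) (z : ι → E) :
    obsWeight g y V z ≠ 0 :=
  (ENNReal.ofReal_pos.2 (Finset.prod_pos fun v _ ↦ hg v (z v))).ne'

lemma obsWeight_le_prod_sum [Fintype E] (hg : ∀ v e, 0 ≤ g v e (y v)) (V : Finset ι) (z : ι → E) :
    obsWeight g y V z ≤ ENNReal.ofReal (∏ v ∈ V, ∑ e, g v e (y v)) :=
  ENNReal.ofReal_le_ofReal <| Finset.prod_le_prod (fun v _ ↦ hg v (z v)) fun v _ ↦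
    Finset.single_le_sum (f := fun e ↦ g v e (y v)) (fun e _ ↦ hg v e) (Finset.mem_univ (z v))

lemma obsWeight_sdiff_mul [DecidableEq ι] (hg : ∀ v e, 0 ≤ g v e (y v)) {V W : Finset ι}
    (hWV : W ⊆ V) : obsWeight g y (V \ W) * obsWeight g y W = obsWeight g y V := by
  ext z
  simp only [Pi.mul_apply, obsWeight]
  rw [← ENNReal.ofReal_mul (Finset.prod_nonneg fun v _ ↦ hg v (z v)), Finset.prod_sdiff hWV]

lemma measurable_cylinderEvents_obsWeight [MeasurableSpace E]
    (hg : ∀ v, Measurable fun e ↦ g v e (y v)) {V : Finset ι} {S : Set ι} (hVS : ↑V ⊆ S) :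
    Measurable[cylinderEvents S] (obsWeight g y V) :=
  ENNReal.measurable_ofReal.comp <| Finset.measurable_fun_prod V fun v hv ↦
    (hg v).comp (measurable_cylinderEvent_apply (hVS hv))

lemma measurable_obsWeight [MeasurableSpace E] (hg : ∀ v, Measurable fun e ↦ g v e (y v))
    (V : Finset ι) : Measurable (obsWeight g y V) :=
  (measurable_cylinderEvents_obsWeight hg subset_rfl).mono cylinderEvents_le_pi le_rfl

lemma lintegral_obsWeight_ne_zero [MeasurableSpace E]
    (hgm : ∀ v, Measurable fun e ↦ g v e (y v)) (hg : ∀ v e, 0 < g v e (y v)) (V : Finset ι)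
    {μ : Measure (ι → E)} (hμ : μ ≠ 0) : ∫⁻ z, obsWeight g y V z ∂μ ≠ 0 := by
  have : NeZero μ := ⟨hμ⟩
  intro h
  obtain ⟨z, hz⟩ := ((lintegral_eq_zero_iff (measurable_obsWeight hgm V)).1 h).exists
  exact obsWeight_ne_zero hg V z hz

lemma lintegral_obsWeight_ne_top [Finite E] [MeasurableSpace E] (hg : ∀ v e, 0 ≤ g v e (y v))
    (V : Finset ι) (μ : Measure (ι → E)) [IsFiniteMeasure μ] :
    ∫⁻ z, obsWeight g y V z ∂μ ≠ ∞ :=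
  have := Fintype.ofFinite E
  (IsFiniteMeasure.lintegral_lt_top_of_bounded_to_ennreal μ ⟨_, obsWeight_le_prod_sum hg V⟩).ne

end ObsWeight

lemma cylσ_le_pi (S : Set (Site d)) : cylσ E S ≤ MeasurableSpace.pi :=
  cylinderEvents_le_pi

lemma bdry_subset_compl (V : Finset (Site d)) : bdry V ⊆ (↑V : Set (Site d))ᶜ :=
  fun _ hv ↦ hv.1

lemma condKer_eq_reweight {F : Type*} (γ : Finset (Site d) → Conf E d → Measure (Conf E d))
    (g : Site d → E → F → ℝ) (y : Site d → F) (V : Finset (Site d)) (x : Conf E d) :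
    condKer γ g y V x = reweight (γ V x) (obsWeight g y V) := by
  simp only [condKer, withDensity_apply _ MeasurableSet.univ, Measure.restrict_univ]
  rfl

namespace IsSpecification

variable {γ : Finset (Site d) → Conf E d → Measure (Conf E d)}

lemma measurable_cylσ_compl (hγ : IsSpecification γ) (V : Finset (Site d)) :
    Measurable[cylσ E (↑V : Set (Site d))ᶜ] (γ V) := by
  have := hγ.prob V
  refine measurable_of_proper (cylinderEvents_sup_compl (↑V : Set (Site d))).symm
    (hγ.proper V) fun A hA ↦ ?_
  exact (hγ.bdryMeas V A hA).mono (cylinderEvents_mono (bdry_subset_compl V)) le_rfl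

/-- `γ_V` as a kernel from the exterior σ-algebra `σ(X_{V^c})`, the source with respect to which it
is proper. -/
def exteriorKernel (hγ : IsSpecification γ) (V : Finset (Site d)) :
    Kernel[cylσ E (↑V : Set (Site d))ᶜ, MeasurableSpace.pi] (Conf E d) (Conf E d) :=
  @Kernel.mk _ _ (_) _ (γ V) (hγ.measurable_cylσ_compl V)

lemma isProper_exteriorKernel (hγ : IsSpecification γ) (V : Finset (Site d)) :
    (hγ.exteriorKernel V).IsProper :=
  have := hγ.prob V
  .of_inter_eq_indicator_mul (cylσ_le_pi _) fun A _ B hB x ↦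
    measure_inter_eq_indicator_mul (cylσ_le_pi _ B hB) (hγ.proper V B hB x) A

lemma exteriorKernel_comp (hγ : IsSpecification γ) {V W : Finset (Site d)} (hWV : W ⊆ V)
    (x : Conf E d) : hγ.exteriorKernel W ∘ₘ γ V x = γ V x := by
  ext A hA
  rw [Measure.bind_apply hA
    ((hγ.exteriorKernel W).measurable.mono (cylσ_le_pi _) le_rfl).aemeasurable]
  exact hγ.consistent V W hWV A hA x

end IsSpecification

theorem statement13_general {F : Type*}
    {γ : Finset (Site d) → Conf E d → Measure (Conf E d)} (hγ : IsSpecification γ)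
    {g : Site d → E → F → ℝ} {y : Site d → F} (hgm : ∀ v, Measurable fun e ↦ g v e (y v))
    (hg : ∀ v e, 0 ≤ g v e (y v)) (h₀ : ∀ V x, ∫⁻ z, obsWeight g y V z ∂γ V x ≠ 0)
    (h_top : ∀ V x, ∫⁻ z, obsWeight g y V z ∂γ V x ≠ ∞) :
    IsSpecification (condKer γ g y) := by
  have hw := measurable_obsWeight (y := y) hgm
  simp only [funext₂ (condKer_eq_reweight γ g y)]
  exact
  { prob V x := isProbabilityMeasure_reweight (h₀ V x) (h_top V x)
    kernel V A hA := measurable_reweight_apply le_rfl (hγ.kernel V) (hw V) hA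
    bdryMeas V A hA := measurable_reweight_apply (cylσ_le_pi _) (hγ.bdryMeas V)
      (measurable_cylinderEvents_obsWeight hgm subset_rfl) hA
    proper V A hA x := reweight_apply_of_isProper (hγ.isProper_exteriorKernel V)
      (cylσ_le_pi _) (hw V) (h₀ V x) (h_top V x) hA
    consistent V W hWV A hA x := by
      have hext : Measurable[cylσ E (↑W : Set (Site d))ᶜ] (obsWeight g y (V \ W)) :=
        measurable_cylinderEvents_obsWeight hgm fun v hv ↦ (Finset.mem_sdiff.1 hv).2
      rw [← obsWeight_sdiff_mul hg hWV]
      exact lintegral_reweight_apply_of_comp_eq (hγ.isProper_exteriorKernel W) (cylσ_le_pi _)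
        (hw W) hext (h₀ W) (h_top W) (hγ.exteriorKernel_comp hWV x) hA }

/-- **Proposition 5.5(1).**  If `γ` is a specification and the local observation densities
`g_v` are measurable and strictly positive, then for every observation configuration
`y ∈ F^{ℤ^d}` the conditional family `γ^y` is again a specification. -/
theorem statement13 [Fintype E] {F : Type*} [MeasurableSpace F] [StandardBorelSpace F]
    (γ : Finset (Site d) → Conf E d → Measure (Conf E d)) (hγ : IsSpecification γ)
    (g : Site d → E → F → ℝ) (hgm : ∀ v, Measurable (Function.uncurry (g v)))
    (hgpos : ∀ v e y, 0 < g v e y) :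
    ∀ y : Site d → F, IsSpecification fun V x => condKer γ g y V x := by
  intro y
  have := hγ.prob
  have hgm_y (v : Site d) : Measurable fun e ↦ g v e (y v) := (hgm v).of_uncurry_right
  exact statement13_general hγ hgm_y (fun v e ↦ (hgpos v e _).le)
    (fun V x ↦ lintegral_obsWeight_ne_zero hgm_y (fun v e ↦ hgpos v e _) V
      (IsProbabilityMeasure.ne_zero _))
    (fun V x ↦ lintegral_obsWeight_ne_top (fun v e ↦ (hgpos v e _).le) V _)

end RandomField
end
end

section
/- Suppose the specification γ is monotone. Then: (1) for every y ∈ {−1,1}^{ℤ^d}, the conditional specification γ^y is monotone; and (2) for every finite V ⊂ ℤ^d and every bounded increasing f : Ω → ℝ, the map (x, y) ↦ (γ_V^y f)(x) is increasing in x and increasing in y (with respect to the pointwise partial orders). -/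
open MeasureTheory Filter

noncomputable section

namespace RandomField

variable {E : Type*} [MeasurableSpace E] {d : ℕ}

/-- The two-point spin space `{-1, 1} ⊆ ℝ`. -/
abbrev Spin : Type := ({-1, 1} : Set ℝ)

/-- Spin configurations `{-1,1}^{ℤ^d}`, with the pointwise partial order. -/
abbrev SConf (d : ℕ) := Site d → Spin

/-- Boundedness of a real-valued function. -/
def Bdd {α : Type*} (f : α → ℝ) : Prop := ∃ C, ∀ x, |f x| ≤ C

/-- A local function: one depending on only finitely many coordinates. -/
def IsLocal {d : ℕ} (f : SConf d → ℝ) : Prop :=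
  ∃ S : Finset (Site d), ∀ x z : SConf d, (∀ v ∈ S, x v = z v) → f x = f z

/-- A specification is monotone if `γ_V f` is increasing for every bounded
(measurable) increasing `f` and every finite `V`. -/
def MonotoneSpec {d : ℕ} (γ : Finset (Site d) → SConf d → Measure (SConf d)) : Prop :=
  ∀ (V : Finset (Site d)) (f : SConf d → ℝ), Measurable f → Monotone f → Bdd f →
    Monotone fun x => ∫ z, f z ∂(γ V x)

/-- `μ` is specified by `δ`: `∫_B δ_V(x, A) μ(dx) = μ(A ∩ B)` for every finite `V`,
measurable `A`, and `B ∈ σ(X_{V^c})`. -/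
def SpecifiedBy {d : ℕ} (δ : Finset (Site d) → SConf d → Measure (SConf d))
    (μ : Measure (SConf d)) : Prop :=
  ∀ (V : Finset (Site d)) (A B : Set (SConf d)), MeasurableSet A →
    MeasurableSet[cylσ Spin ((↑V : Set (Site d))ᶜ)] B →
    ∫⁻ x in B, δ V x A ∂μ = μ (A ∩ B)

/-- The conditional specification
`γ_V^y(x, A) ∝ ∫ 1_A(z) ∏_{v∈V} e^{β_v y_v z_v} γ_V(x, dz)`. -/
def condSpinKer {d : ℕ} (γ : Finset (Site d) → SConf d → Measure (SConf d))
    (β : Site d → ℝ) (y : SConf d) (V : Finset (Site d)) (x : SConf d) :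
    Measure (SConf d) :=
  let ρ := (γ V x).withDensity fun z =>
    ENNReal.ofReal (Real.exp (∑ v ∈ V, β v * (y v : ℝ) * (z v : ℝ)))
  (ρ Set.univ)⁻¹ • ρ

/-- The maximal configuration `𝐛+`. -/
def bpos {d : ℕ} : SConf d := fun _ => ⟨1, by norm_num⟩

/-- The minimal configuration `𝐛−`. -/
def bneg {d : ℕ} : SConf d := fun _ => ⟨-1, by norm_num⟩

/-! External fields are switched on one site at a time. Let `γ` and `γ'` be specifications such
that `γ_V(x, ·)` is stochastically dominated by `γ'_V(x', ·)` whenever `x ≤ x'`, and tilt them by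
`exp (b z_v)` and `exp (b' z_v)` with `b ≤ b'`. Given the spin at `v ∈ V`, the tilt is a constant,
so the tilted measures are mixtures, over the value of that spin, of the untilted `γ_{V ∖ v}` and
`γ'_{V ∖ v}`, which are ordered by hypothesis. The weights of the mixtures are the tilted laws of a
single spin; on a two-point space these are governed by the probability of `+1`, which increases
both with the untilted probability and with the tilt. So domination survives each step. Starting
from the domination of `γ` by itself, which is monotonicity, one arrives at the conditional
specifications. -/

section Bounded

variable {α : Type*}

lemma Bdd.mul {f g : α → ℝ} (hf : Bdd f) (hg : Bdd g) : Bdd fun a => f a * g a := by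
  obtain ⟨C, hC⟩ := hf
  obtain ⟨D, hD⟩ := hg
  refine ⟨C * D, fun a => ?_⟩
  rw [abs_mul]
  exact mul_le_mul (hC a) (hD a) (abs_nonneg _) ((abs_nonneg _).trans (hC a))

lemma Bdd.exp {f : α → ℝ} (hf : Bdd f) : Bdd fun a => Real.exp (f a) := by
  obtain ⟨C, hC⟩ := hf
  refine ⟨Real.exp C, fun a => ?_⟩
  rw [Real.abs_exp]
  exact Real.exp_le_exp.2 ((le_abs_self _).trans (hC a))

lemma Bdd.sum {ι : Type*} {f : ι → α → ℝ} (s : Finset ι) (hf : ∀ i, Bdd (f i)) :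
    Bdd fun a => ∑ i ∈ s, f i a := by
  choose C hC using hf
  exact ⟨∑ i ∈ s, C i, fun a =>
    (Finset.abs_sum_le_sum_abs _ _).trans (Finset.sum_le_sum fun i _ => hC i a)⟩

variable [MeasurableSpace α]

lemma Bdd.integrable {f : α → ℝ} (hb : Bdd f) (hf : Measurable f) (μ : Measure α)
    [IsFiniteMeasure μ] : Integrable f μ := by
  obtain ⟨C, hC⟩ := hb
  exact Integrable.of_bound hf.aestronglyMeasurable C (Eventually.of_forall hC)

lemma Bdd.integral {ι : Type*} {f : α → ℝ} (hb : Bdd f) (κ : ι → Measure α)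
    [∀ i, IsProbabilityMeasure (κ i)] : Bdd fun i => ∫ a, f a ∂κ i := by
  obtain ⟨C, hC⟩ := hb
  refine ⟨C, fun i => ?_⟩
  simpa using norm_integral_le_of_norm_le_const (μ := κ i) (f := f) (Eventually.of_forall hC)

end Bounded

section Tilting

variable {α : Type*} [MeasurableSpace α] {μ : Measure α} {H : α → ℝ}

lemma integral_tilted_eq_div (μ : Measure α) (H g : α → ℝ) :
    ∫ a, g a ∂μ.tilted H = (∫ a, Real.exp (H a) * g a ∂μ) / ∫ a, Real.exp (H a) ∂μ := by
  simp only [integral_tilted, smul_eq_mul, div_mul_eq_mul_div, integral_div]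

lemma tilted_eq_self_of_ae_eq_const [IsProbabilityMeasure μ] {c : ℝ} (h : ∀ᵐ a ∂μ, H a = c) :
    μ.tilted H = μ :=
  (tilted_congr h).trans (tilted_const μ c)

lemma inv_smul_withDensity_exp_eq_tilted [NeZero μ]
    (hH : Integrable (fun a => Real.exp (H a)) μ) :
    (μ.withDensity (fun a => ENNReal.ofReal (Real.exp (H a))) Set.univ)⁻¹ •
      μ.withDensity (fun a => ENNReal.ofReal (Real.exp (H a))) = μ.tilted H := by
  have hZ : 0 < ∫ a, Real.exp (H a) ∂μ := integral_exp_pos hH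
  have hmass : μ.withDensity (fun a => ENNReal.ofReal (Real.exp (H a))) Set.univ =
      ENNReal.ofReal (∫ a, Real.exp (H a) ∂μ) := by
    rw [withDensity_apply _ MeasurableSet.univ, Measure.restrict_univ,
      ofReal_integral_eq_lintegral_ofReal hH (Eventually.of_forall fun a => (Real.exp_pos _).le)]
  rw [hmass, ← withDensity_smul' _ _ (ENNReal.inv_ne_top.2 (ENNReal.ofReal_pos.2 hZ).ne'),
    Measure.tilted]
  congr 1
  funext a
  rw [Pi.smul_apply, smul_eq_mul, ENNReal.ofReal_div_of_pos hZ, ENNReal.div_eq_inv_mul]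

end Tilting

section CylinderMeasurability

lemma measurable_eval_cylσ {S : Set (Site d)} {v : Site d} (hv : v ∈ S) :
    Measurable[cylσ E S] fun x : Conf E d => x v :=
  measurable_iff_comap_le.2 <| le_iSup₂_of_le
    (f := fun u (_ : u ∈ S) => MeasurableSpace.comap (fun x : Conf E d => x u) inferInstance)
    v hv le_rfl

open Classical in
lemma measurable_piecewise_cylσ (V : Finset (Site d)) (z : Conf E d) :
    Measurable[cylσ E (↑V : Set (Site d))] fun w : Conf E d => V.piecewise w z := by
  refine @measurable_pi_lambda _ _ _ (cylσ E (↑V : Set (Site d))) _ _ fun u => ?_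
  by_cases hu : u ∈ V
  · simpa only [Finset.piecewise_eq_of_mem _ _ _ hu] using measurable_eval_cylσ hu
  · simpa only [Finset.piecewise_eq_of_notMem _ _ _ hu] using
      @measurable_const _ _ _ (cylσ E (↑V : Set (Site d))) _

lemma cylσ_le_comap_domRestrict (S : Set (Site d)) :
    cylσ E S ≤ MeasurableSpace.comap (S.domRestrict : Conf E d → S → E) inferInstance :=
  iSup₂_le fun v hv => by
    rintro _ ⟨B, hB, rfl⟩
    exact ⟨_, measurable_pi_apply (⟨v, hv⟩ : S) hB, rfl⟩

lemma dependsOn_of_measurable_cylσ {β : Type*} [MeasurableSpace β] [MeasurableSingletonClass β]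
    {S : Set (Site d)} {g : Conf E d → β} (hg : Measurable[cylσ E S] g) : DependsOn g S :=
  dependsOn_iff_factorsThrough.2 (hg.mono (cylσ_le_comap_domRestrict S) le_rfl).factorsThrough

end CylinderMeasurability

/-- A specification in the sense of Dobrushin, Lanford and Ruelle: a proper consistent family of
probability kernels `γ_V`, where `γ_V(x, ·)` may depend on all of `x` outside `V` and not only on
its values on `∂V`. This class is closed under tilting by arbitrary bounded functions. Kernels enter
only through integrals of bounded functions, so measurability and consistency are expressed through
these. -/
structure IsDLRSpecification (γ : Finset (Site d) → Conf E d → Measure (Conf E d)) : Prop where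
  prob : ∀ V x, IsProbabilityMeasure (γ V x)
  measurable_integral : ∀ V (g : Conf E d → ℝ), Measurable g → Bdd g →
    Measurable fun x => ∫ z, g z ∂γ V x
  dependsOn : ∀ V, DependsOn (γ V) (↑V : Set (Site d))ᶜ
  ae_eq_off : ∀ V x, ∀ᵐ z ∂γ V x, ∀ u ∉ V, z u = x u
  integral_integral : ∀ V W, W ⊆ V → ∀ (g : Conf E d → ℝ), Measurable g → Bdd g →
    ∀ x, ∫ z, ∫ u, g u ∂γ W z ∂γ V x = ∫ z, g z ∂γ V x

namespace IsSpecification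

open ProbabilityTheory

variable {γ : Finset (Site d) → Conf E d → Measure (Conf E d)}

/-- The map `γ_V` bundled as a Markov kernel. -/
def toKernel (hγ : IsSpecification γ) (V : Finset (Site d)) : Kernel (Conf E d) (Conf E d) :=
  ⟨γ V, Measure.measurable_of_measurable_coe _ (hγ.kernel V)⟩

instance isMarkovKernel_toKernel (hγ : IsSpecification γ) (V : Finset (Site d)) :
    IsMarkovKernel (hγ.toKernel V) :=
  ⟨hγ.prob V⟩

lemma toKernel_comp_toKernel (hγ : IsSpecification γ) {V W : Finset (Site d)} (hWV : W ⊆ V) :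
    hγ.toKernel W ∘ₖ hγ.toKernel V = hγ.toKernel V := by
  ext x A hA
  rw [Kernel.comp_apply' _ _ _ hA]
  exact hγ.consistent V W hWV A hA x

lemma measurable_integral (hγ : IsSpecification γ) (V : Finset (Site d)) {g : Conf E d → ℝ}
    (hg : Measurable g) : Measurable fun x => ∫ z, g z ∂γ V x :=
  (hg.stronglyMeasurable.integral_kernel (κ := hγ.toKernel V)).measurable

lemma integral_integral (hγ : IsSpecification γ) {V W : Finset (Site d)} (hWV : W ⊆ V)
    {g : Conf E d → ℝ} (x : Conf E d) (hg : Integrable g (γ V x)) :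
    ∫ z, ∫ u, g u ∂γ W z ∂γ V x = ∫ z, g z ∂γ V x := by
  have hcomp := hγ.toKernel_comp_toKernel hWV
  have hint := Kernel.integral_comp (η := hγ.toKernel W) (κ := hγ.toKernel V) (a := x) (f := g)
    (by rw [hcomp]; exact hg)
  rw [hcomp] at hint
  exact hint.symm

variable [MeasurableSingletonClass E]

lemma ae_eq_off (hγ : IsSpecification γ) (V : Finset (Site d)) (x : Conf E d) :
    ∀ᵐ z ∂γ V x, ∀ u ∉ V, z u = x u := by
  have := hγ.prob V x
  refine ae_all_iff.2 fun u => ?_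
  by_cases hu : u ∈ V
  · exact Eventually.of_forall fun z h => absurd hu h
  have hcyl : MeasurableSet[cylσ E (↑V : Set (Site d))ᶜ] {z : Conf E d | z u = x u} :=
    measurable_eval_cylσ (by simpa using hu) (measurableSet_singleton (x u))
  have hone : γ V x {z | z u = x u} = 1 := by
    rw [hγ.proper V _ hcyl x, Set.indicator_of_mem (by simp)]
  have hmeas : MeasurableSet {z : Conf E d | z u = x u} :=
    (measurableSet_singleton (x u)).preimage (measurable_pi_apply u)
  filter_upwards [(mem_ae_iff_prob_eq_one hmeas).2 hone] with z hz _ using hz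

open Classical in
lemma measure_piecewise_preimage (hγ : IsSpecification γ) (V : Finset (Site d)) {x z : Conf E d}
    (h : ∀ u ∉ V, x u = z u) (A : Set (Conf E d)) :
    γ V x ((fun w => V.piecewise w z) ⁻¹' A) = γ V x A := by
  refine measure_congr ?_
  filter_upwards [hγ.ae_eq_off V x] with w hw
  have hglue : V.piecewise w z = w := by
    funext u
    by_cases hu : u ∈ V
    · exact Finset.piecewise_eq_of_mem _ _ _ hu
    · rw [Finset.piecewise_eq_of_notMem _ _ _ hu, hw u hu, h u hu]
  change (V.piecewise w z ∈ A) = (w ∈ A)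
  rw [hglue]

lemma dependsOn_compl (hγ : IsSpecification γ) (V : Finset (Site d)) :
    DependsOn (γ V) (↑V : Set (Site d))ᶜ := by
  classical
  intro x x' h
  have hoff : ∀ u ∉ V, x u = x' u := fun u hu => h u (by simpa using hu)
  ext A hA
  rw [← hγ.measure_piecewise_preimage V hoff A,
    ← hγ.measure_piecewise_preimage V (fun _ _ => rfl) A]
  exact dependsOn_of_measurable_cylσ
    (hγ.bdryMeas V _ (measurable_piecewise_cylσ V x' hA)) fun u hu => hoff u hu.1

theorem isDLRSpecification (hγ : IsSpecification γ) : IsDLRSpecification γ where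
  prob := hγ.prob
  measurable_integral V _ hg _ := hγ.measurable_integral V hg
  dependsOn := hγ.dependsOn_compl
  ae_eq_off := hγ.ae_eq_off
  integral_integral V _ hWV _ hg hb x :=
    have := hγ.prob V x
    hγ.integral_integral hWV x (hb.integrable hg _)

end IsSpecification

/-- The family of measures `γ_V(x, ·)` reweighted by `exp H` and normalized. -/
abbrev tiltedFamily (γ : Finset (Site d) → Conf E d → Measure (Conf E d)) (H : Conf E d → ℝ) :
    Finset (Site d) → Conf E d → Measure (Conf E d) :=
  fun V x => (γ V x).tilted H

namespace IsDLRSpecification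

variable {γ : Finset (Site d) → Conf E d → Measure (Conf E d)} {H : Conf E d → ℝ}

lemma integrable_exp (hγ : IsDLRSpecification γ) (hH : Measurable H) (hHb : Bdd H)
    (V : Finset (Site d)) (x : Conf E d) : Integrable (fun z => Real.exp (H z)) (γ V x) :=
  have := hγ.prob V x
  hHb.exp.integrable hH.exp _

lemma integral_mul_of_dependsOn (hγ : IsDLRSpecification γ) {V : Finset (Site d)}
    {G : Conf E d → ℝ} (hG : DependsOn G (↑V : Set (Site d))ᶜ) (g : Conf E d → ℝ)
    (x : Conf E d) : ∫ z, g z * G z ∂γ V x = (∫ z, g z ∂γ V x) * G x := by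
  rw [← integral_mul_const]
  refine integral_congr_ae ?_
  filter_upwards [hγ.ae_eq_off V x] with z hz
  rw [hG fun u hu => hz u (by simpa using hu)]

lemma dependsOn_integral_tilted (hγ : IsDLRSpecification γ) (V : Finset (Site d))
    (H g : Conf E d → ℝ) :
    DependsOn (fun x => ∫ z, g z ∂(γ V x).tilted H) (↑V : Set (Site d))ᶜ :=
  fun _ _ h => by simp only [hγ.dependsOn V h]

lemma measurable_integral_tilted (hγ : IsDLRSpecification γ) (hH : Measurable H) (hHb : Bdd H)
    (V : Finset (Site d)) {g : Conf E d → ℝ} (hg : Measurable g) (hb : Bdd g) :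
    Measurable fun x => ∫ z, g z ∂(γ V x).tilted H := by
  simp only [integral_tilted_eq_div]
  exact (hγ.measurable_integral V _ (hH.exp.mul hg) (hHb.exp.mul hb)).div
    (hγ.measurable_integral V _ hH.exp hHb.exp)

lemma isProbabilityMeasure_tilted (hγ : IsDLRSpecification γ) (hH : Measurable H) (hHb : Bdd H)
    (V : Finset (Site d)) (x : Conf E d) : IsProbabilityMeasure ((γ V x).tilted H) :=
  have := hγ.prob V x
  MeasureTheory.isProbabilityMeasure_tilted (hγ.integrable_exp hH hHb V x)

lemma integral_integral_tilted (hγ : IsDLRSpecification γ) (hH : Measurable H) (hHb : Bdd H)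
    {V W : Finset (Site d)} (hWV : W ⊆ V) {g : Conf E d → ℝ} (hg : Measurable g) (hb : Bdd g)
    (x : Conf E d) :
    ∫ z, ∫ u, g u ∂(γ W z).tilted H ∂(γ V x).tilted H = ∫ z, g z ∂(γ V x).tilted H := by
  have hprob := hγ.prob
  have hprobH := hγ.isProbabilityMeasure_tilted hH hHb W
  set G : Conf E d → ℝ := fun z => ∫ u, g u ∂(γ W z).tilted H with hG_def
  have hG : Measurable G := hγ.measurable_integral_tilted hH hHb W hg hb
  have hGb : Bdd G := hb.integral fun z => (γ W z).tilted H
  have hZ (z : Conf E d) : ∫ u, Real.exp (H u) ∂γ W z ≠ 0 :=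
    (integral_exp_pos (hγ.integrable_exp hH hHb W z)).ne'
  have hnum : ∫ z, Real.exp (H z) * G z ∂γ V x = ∫ z, Real.exp (H z) * g z ∂γ V x := calc
    _ = ∫ z, ∫ u, Real.exp (H u) * G u ∂γ W z ∂γ V x :=
      (hγ.integral_integral V W hWV _ (hH.exp.mul hG) (hHb.exp.mul hGb) x).symm
    _ = ∫ z, (∫ u, Real.exp (H u) ∂γ W z) * G z ∂γ V x := by
      simp only [hγ.integral_mul_of_dependsOn (hγ.dependsOn_integral_tilted W H g) _, hG_def]
    _ = ∫ z, ∫ u, Real.exp (H u) * g u ∂γ W z ∂γ V x := by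
      simp only [hG_def, integral_tilted_eq_div, mul_div_cancel₀ _ (hZ _)]
    _ = ∫ z, Real.exp (H z) * g z ∂γ V x :=
      hγ.integral_integral V W hWV _ (hH.exp.mul hg) (hHb.exp.mul hb) x
  rw [integral_tilted_eq_div, integral_tilted_eq_div, hnum]

protected theorem tilted (hγ : IsDLRSpecification γ) (hH : Measurable H) (hHb : Bdd H) :
    IsDLRSpecification (tiltedFamily γ H) where
  prob := hγ.isProbabilityMeasure_tilted hH hHb
  measurable_integral V _ := hγ.measurable_integral_tilted hH hHb V
  dependsOn V _ _ h := congrArg (Measure.tilted · H) (hγ.dependsOn V h)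
  ae_eq_off V x := (tilted_absolutelyContinuous _ _).ae_le (hγ.ae_eq_off V x)
  integral_integral _ _ hWV _ := hγ.integral_integral_tilted hH hHb hWV

lemma tilted_eval_of_notMem (hγ : IsDLRSpecification γ) {V : Finset (Site d)} {v : Site d}
    (hv : v ∉ V) (x : Conf E d) (φ : E → ℝ) : (γ V x).tilted (fun z => φ (z v)) = γ V x := by
  have := hγ.prob V x
  refine tilted_eq_self_of_ae_eq_const (c := φ (x v)) ?_
  filter_upwards [hγ.ae_eq_off V x] with z hz
  rw [hz v hv]

lemma integral_tilted_eval (hγ : IsDLRSpecification γ) (V : Finset (Site d)) {v : Site d}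
    {φ : E → ℝ} (hφ : Measurable fun z : Conf E d => φ (z v))
    (hφb : Bdd fun z : Conf E d => φ (z v)) {g : Conf E d → ℝ} (hg : Measurable g) (hb : Bdd g)
    (x : Conf E d) :
    ∫ z, g z ∂(γ V x).tilted (fun z => φ (z v)) =
      ∫ z, ∫ u, g u ∂γ (V.erase v) (Function.update x v (z v))
        ∂(γ V x).tilted (fun z => φ (z v)) := by
  rw [← hγ.integral_integral_tilted hφ hφb (V.erase_subset v) hg hb x]
  refine integral_congr_ae ?_
  filter_upwards [(tilted_absolutelyContinuous _ _).ae_le (hγ.ae_eq_off V x)] with z hz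
  have hlocal : γ (V.erase v) z = γ (V.erase v) (Function.update x v (z v)) := by
    refine hγ.dependsOn _ fun u hu => ?_
    obtain rfl | huv := eq_or_ne u v
    · rw [Function.update_self]
    · rw [Function.update_of_ne huv, hz u fun huV => hu (Finset.mem_erase.2 ⟨huv, huV⟩)]
  rw [hγ.tilted_eval_of_notMem (V.notMem_erase v), hlocal]

end IsDLRSpecification

/-- Stochastic domination `μ ≤ ν`, tested on bounded measurable increasing functions. -/
def StochLE {Ω : Type*} [MeasurableSpace Ω] [Preorder Ω] (μ ν : Measure Ω) : Prop :=
  ∀ f : Ω → ℝ, Measurable f → Monotone f → Bdd f → ∫ z, f z ∂μ ≤ ∫ z, f z ∂ν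

lemma StochLE.measureReal_le {Ω : Type*} [MeasurableSpace Ω] [Preorder Ω] {μ ν : Measure Ω}
    (h : StochLE μ ν) {A : Set Ω} (hA : MeasurableSet A) (hup : IsUpperSet A) :
    μ.real A ≤ ν.real A := by
  have hmono : Monotone (A.indicator (1 : Ω → ℝ)) := fun a b hab => by
    by_cases ha : a ∈ A
    · simp [ha, hup hab ha]
    · simpa [ha] using Set.indicator_nonneg (f := (1 : Ω → ℝ)) (fun _ _ => zero_le_one) b
  have hbdd : Bdd (A.indicator (1 : Ω → ℝ)) :=
    ⟨1, fun a => by by_cases ha : a ∈ A <;> simp [ha]⟩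
  simpa only [integral_indicator_one hA] using h _ (measurable_one.indicator hA) hmono hbdd

/-- `γ_V(x, ·)` is stochastically dominated by `γ'_V(x', ·)` whenever `x ≤ x'`. For `γ' = γ` this is
monotonicity of `γ`. -/
def FamilyStochLE [Preorder E] (γ γ' : Finset (Site d) → Conf E d → Measure (Conf E d)) : Prop :=
  ∀ V ⦃x x' : Conf E d⦄, x ≤ x' → StochLE (γ V x) (γ' V x')

lemma MonotoneSpec.familyStochLE {γ : Finset (Site d) → SConf d → Measure (SConf d)}
    (hγ : MonotoneSpec γ) : FamilyStochLE γ γ :=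
  fun V _ _ hx f hf hmono hb => hγ V f hf hmono hb hx

section SingleSpin

/-- The spin `+1`. -/
def plus : Spin := ⟨1, by norm_num⟩

/-- The spin `-1`. -/
def minus : Spin := ⟨-1, by norm_num⟩

@[simp] lemma coe_plus : (plus : ℝ) = 1 := rfl

@[simp] lemma coe_minus : (minus : ℝ) = -1 := rfl

lemma eq_minus_or_eq_plus (s : Spin) : s = minus ∨ s = plus :=
  s.2.imp Subtype.ext Subtype.ext

lemma minus_le_plus : minus ≤ plus := by
  change (-1 : ℝ) ≤ 1
  norm_num

lemma minus_ne_plus : minus ≠ plus := by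
  intro h
  have : (-1 : ℝ) = 1 := congrArg Subtype.val h
  norm_num at this

lemma le_plus (s : Spin) : s ≤ plus := by
  obtain rfl | rfl := eq_minus_or_eq_plus s
  exacts [minus_le_plus, le_rfl]

lemma measurable_comp_eval (φ : Spin → ℝ) (v : Site d) :
    Measurable fun z : SConf d => φ (z v) :=
  (measurable_of_finite φ).comp (measurable_pi_apply v)

lemma bdd_comp_eval (φ : Spin → ℝ) (v : Site d) : Bdd fun z : SConf d => φ (z v) := by
  obtain ⟨C, hC⟩ := (Set.finite_range fun s => |φ s|).bddAbove
  exact ⟨C, fun z => hC ⟨z v, rfl⟩⟩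

lemma measurableSet_eval_eq_plus (v : Site d) : MeasurableSet {z : SConf d | z v = plus} :=
  (measurableSet_singleton plus).preimage (measurable_pi_apply v)

lemma isUpperSet_eval_eq_plus (v : Site d) : IsUpperSet {z : SConf d | z v = plus} :=
  fun _ w hzw hz => le_antisymm (le_plus (w v)) (hz.symm.le.trans (hzw v))

lemma integral_eval (μ : Measure (SConf d)) [IsProbabilityMeasure μ] (v : Site d)
    (φ : Spin → ℝ) :
    ∫ z, φ (z v) ∂μ =
      μ.real {z | z v = plus} * φ plus + (1 - μ.real {z | z v = plus}) * φ minus := by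
  have hA := measurableSet_eval_eq_plus v
  have hsplit (z : SConf d) : φ (z v) =
      {z : SConf d | z v = plus}.indicator 1 z * (φ plus - φ minus) + φ minus := by
    obtain h | h := eq_minus_or_eq_plus (z v) <;> simp [Set.indicator, h, minus_ne_plus]
  simp only [hsplit]
  rw [integral_add (((integrable_const 1).indicator hA).mul_const _) (integrable_const _),
    integral_mul_const, integral_indicator_one hA, integral_const, probReal_univ, one_smul]
  ring

lemma measureReal_tilted_eval_eq_plus (μ : Measure (SConf d)) [IsProbabilityMeasure μ]
    (v : Site d) (b : ℝ) :
    (μ.tilted fun z => b * (z v : ℝ)).real {z | z v = plus} =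
      μ.real {z | z v = plus} * Real.exp b /
        (μ.real {z | z v = plus} * Real.exp b +
          (1 - μ.real {z | z v = plus}) * Real.exp (-b)) := by
  have hind (z : SConf d) : {z : SConf d | z v = plus}.indicator (1 : SConf d → ℝ) z =
      ({plus} : Set Spin).indicator 1 (z v) := rfl
  rw [← integral_indicator_one (measurableSet_eval_eq_plus v), integral_tilted_eq_div]
  simp only [hind]
  rw [integral_eval μ v fun s => Real.exp (b * s),
    integral_eval μ v fun s => Real.exp (b * s) * ({plus} : Set Spin).indicator 1 s]
  simp [Set.indicator, minus_ne_plus]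

lemma tilted_prob_mono {p p' b b' : ℝ} (hp : 0 ≤ p) (hpp' : p ≤ p') (hp' : p' ≤ 1)
    (hb : b ≤ b') :
    p * Real.exp b / (p * Real.exp b + (1 - p) * Real.exp (-b)) ≤
      p' * Real.exp b' / (p' * Real.exp b' + (1 - p') * Real.exp (-b')) := by
  have hpos {q : ℝ} (hq : 0 ≤ q) (hq' : q ≤ 1) (c : ℝ) :
      0 < q * Real.exp c + (1 - q) * Real.exp (-c) := by
    obtain rfl | hq_pos := hq.eq_or_lt
    · simpa using Real.exp_pos (-c)
    · have := sub_nonneg.2 hq'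
      positivity
  rw [div_le_div_iff₀ (hpos hp (hpp'.trans hp') b) (hpos (hp.trans hpp') hp' b')]
  have hodds : p * (1 - p') ≤ p' * (1 - p) := by linarith
  have hexp : Real.exp b * Real.exp (-b') ≤ Real.exp b' * Real.exp (-b) := by
    rw [← Real.exp_add, ← Real.exp_add]
    exact Real.exp_le_exp.2 (by linarith)
  have hcross := mul_le_mul hodds hexp (by positivity)
    (mul_nonneg (hp.trans hpp') (sub_nonneg.2 (hpp'.trans hp')))
  linear_combination hcross

lemma two_point_mixture_le {p p' F₁ F₂ F₁' F₂' : ℝ} (hp : 0 ≤ p) (hpp' : p ≤ p') (hp' : p' ≤ 1)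
    (h₁ : F₁ ≤ F₁') (h₂ : F₂ ≤ F₂') (h₂₁ : F₂ ≤ F₁') :
    p * F₁ + (1 - p) * F₂ ≤ p' * F₁' + (1 - p') * F₂' := calc
  p * F₁ + (1 - p) * F₂ = p * F₁ + (p' - p) * F₂ + (1 - p') * F₂ := by ring
  _ ≤ p * F₁' + (p' - p) * F₁' + (1 - p') * F₂' := by
    have := sub_nonneg.2 hpp'
    have := sub_nonneg.2 hp'
    gcongr
  _ = p' * F₁' + (1 - p') * F₂' := by ring

end SingleSpin

namespace FamilyStochLE

variable {γ γ' : Finset (Site d) → SConf d → Measure (SConf d)}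

lemma integral_erase_le (h : FamilyStochLE γ γ') (V : Finset (Site d)) (v : Site d)
    {x x' : SConf d} (hx : x ≤ x') {s s' : Spin} (hs : s ≤ s') {f : SConf d → ℝ}
    (hf : Measurable f) (hmono : Monotone f) (hb : Bdd f) :
    ∫ z, f z ∂γ (V.erase v) (Function.update x v s) ≤
      ∫ z, f z ∂γ' (V.erase v) (Function.update x' v s') :=
  h _ (update_le_update_iff.2 ⟨hs, fun u _ => hx u⟩) f hf hmono hb

lemma measureReal_tilted_eval_le (h : FamilyStochLE γ γ') (hγ : IsDLRSpecification γ)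
    (hγ' : IsDLRSpecification γ') (V : Finset (Site d)) (v : Site d) {x x' : SConf d}
    (hx : x ≤ x') {b b' : ℝ} (hbb' : b ≤ b') :
    ((γ V x).tilted fun z => b * (z v : ℝ)).real {z | z v = plus} ≤
      ((γ' V x').tilted fun z => b' * (z v : ℝ)).real {z | z v = plus} := by
  have := hγ.prob V x
  have := hγ'.prob V x'
  rw [measureReal_tilted_eval_eq_plus, measureReal_tilted_eval_eq_plus]
  exact tilted_prob_mono measureReal_nonneg
    ((h V hx).measureReal_le (measurableSet_eval_eq_plus v) (isUpperSet_eval_eq_plus v))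
    measureReal_le_one hbb'

theorem tilted_eval (h : FamilyStochLE γ γ') (hγ : IsDLRSpecification γ)
    (hγ' : IsDLRSpecification γ') (v : Site d) {b b' : ℝ} (hbb' : b ≤ b') :
    FamilyStochLE (tiltedFamily γ fun z => b * (z v : ℝ))
      (tiltedFamily γ' fun z => b' * (z v : ℝ)) := by
  intro V x x' hx f hf hmono hb
  have hmeas (c : ℝ) := measurable_comp_eval (fun s => c * (s : ℝ)) v
  have hbdd (c : ℝ) := bdd_comp_eval (fun s => c * (s : ℝ)) v
  have := hγ.isProbabilityMeasure_tilted (hmeas b) (hbdd b) V x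
  have := hγ'.isProbabilityMeasure_tilted (hmeas b') (hbdd b') V x'
  rw [hγ.integral_tilted_eval (φ := fun s => b * (s : ℝ)) V (hmeas b) (hbdd b) hf hb x,
    hγ'.integral_tilted_eval (φ := fun s => b' * (s : ℝ)) V (hmeas b') (hbdd b') hf hb x',
    integral_eval _ v fun s => ∫ u, f u ∂γ (V.erase v) (Function.update x v s),
    integral_eval _ v fun s => ∫ u, f u ∂γ' (V.erase v) (Function.update x' v s)]
  exact two_point_mixture_le measureReal_nonneg (h.measureReal_tilted_eval_le hγ hγ' V v hx hbb')
    measureReal_le_one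
    (h.integral_erase_le V v hx le_rfl hf hmono hb)
    (h.integral_erase_le V v hx le_rfl hf hmono hb)
    (h.integral_erase_le V v hx minus_le_plus hf hmono hb)

end FamilyStochLE

/-- The energy `∑_{v ∈ T} c_v z_v` of the external field `c` acting on the spins in `T`. -/
def externalField (c : Site d → ℝ) (T : Finset (Site d)) (z : SConf d) : ℝ :=
  ∑ v ∈ T, c v * (z v : ℝ)

lemma measurable_externalField (c : Site d → ℝ) (T : Finset (Site d)) :
    Measurable (externalField c T) :=
  Finset.measurable_fun_sum _ fun v _ => measurable_comp_eval (fun s => c v * (s : ℝ)) v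

lemma bdd_externalField (c : Site d → ℝ) (T : Finset (Site d)) : Bdd (externalField c T) :=
  Bdd.sum T fun v => bdd_comp_eval (fun s => c v * (s : ℝ)) v

lemma tiltedFamily_externalField_empty {γ : Finset (Site d) → SConf d → Measure (SConf d)}
    (hγ : ∀ V x, IsProbabilityMeasure (γ V x)) (c : Site d → ℝ) :
    tiltedFamily γ (externalField c ∅) = γ := by
  have hzero : externalField c ∅ = 0 := funext fun _ => Finset.sum_empty
  funext V x
  rw [hzero, tiltedFamily, tilted_zero]

lemma tiltedFamily_externalField_insert {γ : Finset (Site d) → SConf d → Measure (SConf d)}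
    (hγ : IsDLRSpecification γ) (c : Site d → ℝ) {T : Finset (Site d)} {v : Site d}
    (hv : v ∉ T) :
    tiltedFamily γ (externalField c (insert v T)) =
      tiltedFamily (tiltedFamily γ (externalField c T)) fun z => c v * (z v : ℝ) := by
  funext V x
  rw [tiltedFamily, tiltedFamily, tilted_tilted
    (hγ.integrable_exp (measurable_externalField c T) (bdd_externalField c T) V x)]
  congr 1
  funext z
  rw [Pi.add_apply, externalField, externalField, Finset.sum_insert hv, add_comm]

theorem FamilyStochLE.tilted_externalField
    {γ γ' : Finset (Site d) → SConf d → Measure (SConf d)} (h : FamilyStochLE γ γ')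
    (hγ : IsDLRSpecification γ) (hγ' : IsDLRSpecification γ') {c c' : Site d → ℝ}
    {T : Finset (Site d)} (hc : ∀ v ∈ T, c v ≤ c' v) :
    FamilyStochLE (tiltedFamily γ (externalField c T)) (tiltedFamily γ' (externalField c' T)) := by
  induction T using Finset.induction_on with
  | empty =>
    rwa [tiltedFamily_externalField_empty hγ.prob, tiltedFamily_externalField_empty hγ'.prob]
  | insert v T hv ih =>
    rw [tiltedFamily_externalField_insert hγ c hv, tiltedFamily_externalField_insert hγ' c' hv]
    exact (ih fun u hu => hc u (Finset.mem_insert_of_mem hu)).tilted_eval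
      (hγ.tilted (measurable_externalField c T) (bdd_externalField c T))
      (hγ'.tilted (measurable_externalField c' T) (bdd_externalField c' T)) v
      (hc v (Finset.mem_insert_self v T))

lemma condSpinKer_eq_tilted {γ : Finset (Site d) → SConf d → Measure (SConf d)}
    (hγ : IsDLRSpecification γ) (β : Site d → ℝ) (y : SConf d) (V : Finset (Site d))
    (x : SConf d) :
    condSpinKer γ β y V x = tiltedFamily γ (externalField (fun v => β v * (y v : ℝ)) V) V x :=
  have := hγ.prob V x
  inv_smul_withDensity_exp_eq_tilted
    (hγ.integrable_exp (measurable_externalField _ V) (bdd_externalField _ V) V x)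

theorem statement17_general {γ : Finset (Site d) → SConf d → Measure (SConf d)}
    (hγ : IsSpecification γ) (hmono : MonotoneSpec γ) {β β' : Site d → ℝ} {y y' : SConf d}
    {V : Finset (Site d)} (hfield : ∀ v ∈ V, β v * (y v : ℝ) ≤ β' v * (y' v : ℝ))
    {x x' : SConf d} (hx : x ≤ x') :
    StochLE (condSpinKer γ β y V x) (condSpinKer γ β' y' V x') := by
  have hDLR := hγ.isDLRSpecification
  rw [condSpinKer_eq_tilted hDLR, condSpinKer_eq_tilted hDLR]
  exact hmono.familyStochLE.tilted_externalField hDLR hDLR hfield V hx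

/-- **Lemma 5.11 (inheritance of monotonicity).**  If `γ` is a monotone specification and
`β_v ≥ 0`, then every conditional specification `γ^y` is monotone, and for every finite `V`
and bounded increasing `f`, `(x, y) ↦ (γ_V^y f)(x)` is increasing in `x` and in `y`. -/
theorem statement17 {d : ℕ} (γ : Finset (Site d) → SConf d → Measure (SConf d))
    (hγ : IsSpecification γ) (hmono : MonotoneSpec γ)
    (β : Site d → ℝ) (hβ : ∀ v, 0 ≤ β v) :
    (∀ y : SConf d, MonotoneSpec fun V x => condSpinKer γ β y V x) ∧
      ∀ (V : Finset (Site d)) (f : SConf d → ℝ), Measurable f → Monotone f → Bdd f →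
        (∀ y : SConf d, Monotone fun x => ∫ z, f z ∂(condSpinKer γ β y V x)) ∧
        (∀ x : SConf d, Monotone fun y => ∫ z, f z ∂(condSpinKer γ β y V x)) := by
  have hmono_x (y : SConf d) : MonotoneSpec fun V x => condSpinKer γ β y V x :=
    fun _ f hf hfm hb _ _ hx => statement17_general hγ hmono (fun _ _ => le_rfl) hx f hf hfm hb
  exact ⟨hmono_x, fun V f hf hfm hb => ⟨fun y => hmono_x y V f hf hfm hb, fun x y y' hy =>
    statement17_general hγ hmono (fun v _ => mul_le_mul_of_nonneg_left (hy v) (hβ v)) le_rfl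
      f hf hfm hb⟩⟩

end RandomField
end
end
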